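/- For every first-order formula φ in the language of rings with one free variable, there are only finitely many pairs (p, k) with p prime and k ≥ 1 such that the set {x ∈ GaloisField p (2k) : φ is satisfied at x} equals the set {x ∈ GaloisField p (2k) : x^{p^k} = x} (the unique subfield with p^k elements). In particular, for every prime power q outside a finite set, no elementary formula defines F_q inside F_{q^2}. -/

import Mathlib

open FirstOrder

/-- Satisfaction of a ring-language formula at a tuple of a ring `K`, with `K` viewed as a
structure for the language of rings via `compatibleRingOfRing`. -/
def RingFormulaSat {k : ℕ} (φ : Language.ring.Formula (Fin k))
    (K : Type*) [Add K] [Mul K] [Neg K] [One K] [Zero K] (x : Fin k → K) : Prop :=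
  letI := Ring.compatibleRingOfRing K
  φ.Realize x

section part1
open Polynomial

namespace Felg

/-- All coefficients (polynomials in the inner variable) have degree at most `s`. -/
def XD {k : Type*} [Field k] (s : ℕ) (P : k[X][X]) : Prop := ∀ j, (P.coeff j).natDegree ≤ s

section xd
variable {k : Type*} [Field k]

lemma XD.mono {s t : ℕ} {P : k[X][X]} (h : XD s P) (hst : s ≤ t) : XD t P := fun j => (h j).trans hst

lemma XD.zero {s : ℕ} : XD s (0 : k[X][X]) := fun j => by simp

lemma XD.one {s : ℕ} : XD s (1 : k[X][X]) := fun j => by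
  rw [coeff_one]; split_ifs <;> simp

lemma XD.add {s : ℕ} {P Q : k[X][X]} (hP : XD s P) (hQ : XD s Q) : XD s (P + Q) := fun j => by
  rw [coeff_add]; exact natDegree_add_le_of_degree_le (hP j) (hQ j)

lemma XD.sub {s : ℕ} {P Q : k[X][X]} (hP : XD s P) (hQ : XD s Q) : XD s (P - Q) := fun j => by
  rw [coeff_sub]; exact natDegree_sub_le_of_le (hP j) (hQ j) |>.trans (by simp)

lemma XD.sum {ι : Type*} {s : ℕ} (I : Finset ι) {P : ι → k[X][X]} (hP : ∀ i ∈ I, XD s (P i)) :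
    XD s (∑ i ∈ I, P i) := fun j => by
  rw [finsetSum_coeff]
  exact natDegree_sum_le_of_forall_le _ _ fun i hi => hP i hi j

lemma XD.mul {s t : ℕ} {P Q : k[X][X]} (hP : XD s P) (hQ : XD t Q) : XD (s + t) (P * Q) := fun j => by
  rw [coeff_mul]
  exact natDegree_sum_le_of_forall_le _ _ fun i hi => natDegree_mul_le_of_le (hP _) (hQ _)

lemma XD.pow {s : ℕ} {P : k[X][X]} (hP : XD s P) (n : ℕ) : XD (n * s) (P ^ n) := by
  induction n with
  | zero => simpa using XD.one
  | succ n ih => rw [pow_succ, Nat.succ_mul]; exact ih.mul hP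

lemma XD.C {s : ℕ} {a : k[X]} (h : a.natDegree ≤ s) : XD s (C a) := fun j => by
  rw [coeff_C]; split_ifs <;> simp [h]

lemma XD.X {s : ℕ} : XD s (X : k[X][X]) := fun j => by
  rw [coeff_X]; split_ifs <;> simp

lemma XD.Xpow {s : ℕ} (n : ℕ) : XD s ((Polynomial.X : k[X][X]) ^ n : k[X][X]) := fun j => by
  rw [coeff_X_pow]; split_ifs <;> simp

lemma XD.mod {g : k[X][X]} (hg : g.Monic) {c : ℕ} (hc : XD c g) :
    ∀ (t s : ℕ) (P : k[X][X]), P.natDegree ≤ t → XD s P → XD (s + c * t) (P %ₘ g) := by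
  intro t
  induction t with
  | zero =>
    intro s P hP hs
    by_cases h1 : g = 1
    · subst h1; simpa using XD.zero
    · rw [(modByMonic_eq_self_iff hg).2]
      · simpa using hs
      · refine lt_of_le_of_lt degree_le_natDegree ?_
        rw [degree_eq_natDegree hg.ne_zero]
        have : 0 < g.natDegree := by
          rw [Nat.pos_iff_ne_zero]; intro h; exact h1 ((Polynomial.Monic.natDegree_eq_zero hg).1 h)
        exact_mod_cast lt_of_le_of_lt hP this
  | succ t ih =>
    intro s P hP hs
    by_cases hlt : P.degree < g.degree
    · rw [(modByMonic_eq_self_iff hg).2 hlt]; exact hs.mono (by omega)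
    · have hle : g.natDegree ≤ P.natDegree := by
        by_contra h; push Not at h; exact hlt (degree_lt_degree h)
      set T := Polynomial.C (P.coeff (t+1)) * Polynomial.X ^ (t + 1 - g.natDegree) with hT
      have key : P %ₘ g = (P - T * g) %ₘ g := by
        rw [sub_modByMonic, (modByMonic_eq_zero_iff_dvd hg).2 (Dvd.intro_left _ rfl), sub_zero]
      rw [key]
      have hd : (P - T * g).natDegree ≤ t := by
        rw [natDegree_le_iff_coeff_eq_zero]
        intro N hN
        rcases Nat.lt_or_ge (t+1) N with h | h
        · have h1 : P.coeff N = 0 := coeff_eq_zero_of_natDegree_lt (by omega)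
          have h2 : (T * g).natDegree ≤ t + 1 := by
            refine natDegree_mul_le.trans ?_
            have : T.natDegree ≤ t + 1 - g.natDegree := natDegree_C_mul_X_pow_le _ _
            omega
          rw [coeff_sub, h1, coeff_eq_zero_of_natDegree_lt (by omega), sub_zero]
        · have : N = t + 1 := by omega
          subst this
          rw [coeff_sub, hT, mul_assoc, coeff_C_mul, coeff_X_pow_mul', if_pos (by omega)]
          have : t + 1 - (t + 1 - g.natDegree) = g.natDegree := by omega
          rw [this, hg.coeff_natDegree]; simp
      have hx : XD (s + c) (P - T * g) := by
        refine (hs.mono (by omega)).sub (XD.mul ?_ hc)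
        simpa using (XD.C (hs (t+1))).mul (XD.Xpow (s := 0) (t + 1 - g.natDegree))
      exact (ih _ _ hd hx).mono (by rw [Nat.mul_succ]; omega)

end xd

lemma natDegree_det_le' {k : Type*} [Field k] {n M : ℕ} (A : Matrix (Fin n) (Fin n) k[X])
    (hA : ∀ i j, (A i j).natDegree ≤ M) : A.det.natDegree ≤ n * M := by
  rw [Matrix.det_apply]
  refine natDegree_sum_le_of_forall_le _ _ fun σ _ => ?_
  have h1 : (Equiv.Perm.sign σ • ∏ i, A (σ i) i).natDegree ≤ (∏ i, A (σ i) i).natDegree := by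
    rcases Int.units_eq_one_or (Equiv.Perm.sign σ) with h | h <;> simp [h]
  refine h1.trans ((natDegree_prod_le _ _).trans ?_)
  calc _ ≤ ∑ i : Fin n, M := Finset.sum_le_sum fun i _ => hA _ _
    _ = _ := by simp

lemma zero_count {k : Type*} [Field k] {g h : k[X][X]} (hg : g.Monic) (hirr : Irreducible g)
    (hh : ¬ g ∣ h) {M : ℕ} (hM : ∀ b < g.natDegree, XD M ((h * X ^ b) %ₘ g))
    {B : Type*} [CommRing B] [Algebra k B] (φ : k[X][X] →ₐ[k] B) (hφg : φ g = 0) (hφh : φ h = 0)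
    {ι : Type*} [Fintype ι] (w : ι → B) (hw : LinearIndependent k w) (hr : ∀ i, ∃ P, φ P = w i) :
    Fintype.card ι ≤ g.natDegree * M := by
  have : Fact (Irreducible g) := ⟨hirr⟩
  have hprime : Prime g := hirr.prime
  have : IsDomain (AdjoinRoot g) := AdjoinRoot.isDomain_of_prime hprime
  set H : AdjoinRoot g := AdjoinRoot.mk g h with hH
  have hH0 : H ≠ 0 := by rwa [hH, Ne, AdjoinRoot.mk_eq_zero]
  let b := AdjoinRoot.powerBasisAux' hg
  have hfr := finrank_quotient_span_eq_natDegree_norm (F := k) b hH0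
  have hfin : Module.Finite k (AdjoinRoot g ⧸ Ideal.span ({H} : Set (AdjoinRoot g))) := by
    have h0 : Ideal.span ({H} : Set (AdjoinRoot g)) ≠ ⊥ := by
      rwa [Ne, Ideal.span_singleton_eq_bot]
    exact Module.Finite.equiv (Ideal.quotientEquivDirectSum k b h0).symm
  have hle : (Algebra.norm k[X] H).natDegree ≤ g.natDegree * M := by
    rw [Algebra.norm_eq_matrix_det b]
    refine natDegree_det_le' _ fun i j => ?_
    rw [Algebra.leftMulMatrix_apply, LinearMap.toMatrix_apply]
    have hb : b j = AdjoinRoot.mk g (X ^ (j : ℕ)) := by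
      have := (AdjoinRoot.powerBasis' hg).basis_eq_pow j
      rw [map_pow, AdjoinRoot.mk_X]
      exact this
    have : (Algebra.lmul k[X] (AdjoinRoot g)) H (b j) = AdjoinRoot.mk g (h * X ^ (j : ℕ)) := by
      rw [hb]; simp [hH]
    rw [this, AdjoinRoot.powerBasisAux'_repr_apply_to_fun, AdjoinRoot.modByMonicHom_mk]
    exact hM j j.2 i
  let φ1 : AdjoinRoot g →ₐ[k] B := Ideal.Quotient.liftₐ _ φ (by
    intro a ha
    rw [Ideal.mem_span_singleton] at ha
    obtain ⟨c, rfl⟩ := ha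
    simp [hφg])
  have hφ1 : ∀ P, φ1 (AdjoinRoot.mk g P) = φ P := fun P => rfl
  let φ2 : (AdjoinRoot g ⧸ Ideal.span ({H} : Set (AdjoinRoot g))) →ₐ[k] B :=
    Ideal.Quotient.liftₐ _ φ1 (by
      intro a ha
      rw [Ideal.mem_span_singleton] at ha
      obtain ⟨c, rfl⟩ := ha
      rw [map_mul, hH, hφ1, hφh, zero_mul])
  have hφ2 : ∀ P, φ2 (Ideal.Quotient.mk _ (AdjoinRoot.mk g P)) = φ P := fun P => rfl
  choose P hP using hr
  have hli : LinearIndependent k (fun i => Ideal.Quotient.mk (Ideal.span ({H} : Set (AdjoinRoot g)))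
      (AdjoinRoot.mk g (P i))) := by
    apply LinearIndependent.of_comp φ2.toLinearMap
    have hc : (φ2.toLinearMap ∘ fun i => Ideal.Quotient.mk (Ideal.span ({H} : Set (AdjoinRoot g)))
      (AdjoinRoot.mk g (P i))) = w := by
      funext i
      simp only [Function.comp, AlgHom.toLinearMap_apply, hφ2, hP]
    rw [hc]
    exact hw
  exact (hli.fintype_card_le_finrank).trans (hfr.le.trans hle)

end Felg

end part1

section part2
open Polynomial

namespace Felg

/-- A finitely generated domain over an algebraically closed field has a rational point. -/
lemma exists_retraction {A B : Type*} [Field A] [IsAlgClosed A] [CommRing B] [Nontrivial B]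
    [Algebra A B] [Algebra.FiniteType A B] : ∃ π : B →+* A, ∀ a, π (algebraMap A B a) = a := by
  obtain ⟨m, hm⟩ := Ideal.exists_maximal B
  let _ : Field (B ⧸ m) := Ideal.Quotient.field m
  have : Algebra.FiniteType A (B ⧸ m) :=
    Algebra.FiniteType.of_surjective (Ideal.Quotient.mkₐ A m) (Ideal.Quotient.mkₐ_surjective A m)
  have : Module.Finite A (B ⧸ m) := finite_of_finite_type_of_isJacobsonRing A (B ⧸ m)
  have hb : Function.Bijective (algebraMap A (B ⧸ m)) :=
    IsAlgClosed.algebraMap_bijective_of_isIntegral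
  let e := RingEquiv.ofBijective (algebraMap A (B ⧸ m)) hb
  refine ⟨e.symm.toRingHom.comp (Ideal.Quotient.mk m), fun a => ?_⟩
  simp only [RingHom.comp_apply]
  change e.symm (algebraMap A (B ⧸ m) a) = a
  exact e.symm_apply_apply a

lemma mem_lifts2 {B W : Type*} [CommRing B] [CommRing W] (f : B →+* W) (P : W[X][X])
    (h : ∀ i j, (P.coeff i).coeff j ∈ Set.range f) : P ∈ lifts (mapRingHom f) := by
  rw [lifts_iff_coeff_lifts]
  intro n
  have : P.coeff n ∈ lifts f := by rw [lifts_iff_coeff_lifts]; exact h n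
  rw [mem_lifts] at this
  obtain ⟨q, hq⟩ := this
  exact ⟨q, by simpa using hq⟩

lemma irreducible_map {A W : Type*} [Field A] [IsAlgClosed A] [Field W] (i : A →+* W)
    {g : A[X][X]} (hg : g.Monic) (hirr : Irreducible g) : Irreducible (g.map (mapRingHom i)) := by
  let _ := i.toAlgebra
  have hgm : (g.map (mapRingHom i)).Monic := hg.map _
  rw [hgm.irreducible_iff_natDegree]
  have h0 := (hg.irreducible_iff_natDegree).1 hirr
  refine ⟨?_, ?_⟩
  · intro h
    apply h0.1
    rw [← hg.natDegree_eq_zero, ← hg.natDegree_map (mapRingHom i), h, natDegree_one]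
  intro f h hf hh hfh
  let S : Set W := (⋃ i ∈ Finset.range (f.natDegree + 1), ((f.coeff i).coeffs : Set W)) ∪
    (⋃ i ∈ Finset.range (h.natDegree + 1), ((h.coeff i).coeffs : Set W))
  have hS : S.Finite := by
    apply Set.Finite.union <;>
    exact Set.Finite.biUnion (Finset.finite_toSet _) (fun i _ => Finset.finite_toSet _)
  let B := Algebra.adjoin A S
  have hBf : Algebra.FiniteType A B := by
    rw [← Subalgebra.fg_iff_finiteType, Subalgebra.fg_def]
    exact ⟨S, hS, rfl⟩
  have memf : ∀ i j, (f.coeff i).coeff j ∈ Set.range (algebraMap B W) := by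
    intro i j
    by_cases hz : (f.coeff i).coeff j = 0
    · exact ⟨0, by simp [hz]⟩
    · have hi : i < f.natDegree + 1 := by
        by_contra hlt
        rw [coeff_eq_zero_of_natDegree_lt (by omega : f.natDegree < i)] at hz
        simp at hz
      refine ⟨⟨_, Algebra.subset_adjoin (Or.inl ?_)⟩, rfl⟩
      simp only [Set.mem_iUnion]
      exact ⟨i, by simpa using hi, coeff_mem_coeffs hz⟩
  have memh : ∀ i j, (h.coeff i).coeff j ∈ Set.range (algebraMap B W) := by
    intro i j
    by_cases hz : (h.coeff i).coeff j = 0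
    · exact ⟨0, by simp [hz]⟩
    · have hi : i < h.natDegree + 1 := by
        by_contra hlt
        rw [coeff_eq_zero_of_natDegree_lt (by omega : h.natDegree < i)] at hz
        simp at hz
      refine ⟨⟨_, Algebra.subset_adjoin (Or.inr ?_)⟩, rfl⟩
      simp only [Set.mem_iUnion]
      exact ⟨i, by simpa using hi, coeff_mem_coeffs hz⟩
  obtain ⟨f', hf', hf'd, hf'm⟩ := lifts_and_natDegree_eq_and_monic (mem_lifts2 _ f memf) hf
  obtain ⟨h', hh', hh'd, hh'm⟩ := lifts_and_natDegree_eq_and_monic (mem_lifts2 _ h memh) hh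
  have hinj : Function.Injective (algebraMap B W) := Subtype.val_injective
  have hprod : f' * h' = g.map (mapRingHom (algebraMap A B)) := by
    apply map_injective (mapRingHom (algebraMap B W)) (map_injective _ hinj)
    rw [Polynomial.map_mul, hf', hh', hfh, Polynomial.map_map, mapRingHom_comp]
    rfl
  obtain ⟨π, hπ⟩ := exists_retraction (A := A) (B := B)
  have hπ' : π.comp (algebraMap A B) = RingHom.id A := RingHom.ext hπ
  have := h0.2 (f'.map (mapRingHom π)) (h'.map (mapRingHom π)) (hf'm.map _) (hh'm.map _) (by
    rw [← Polynomial.map_mul, hprod, Polynomial.map_map, mapRingHom_comp, hπ']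
    simp)
  rwa [hf'm.natDegree_map, hh'm.natDegree_map, hf'd, hh'd] at this

/-- In a separable extension of `k(x)`, `x` is not a `p`-th power. -/
lemma not_pth_power {k E : Type*} [Field k] [Field E] (p : ℕ) [hp : Fact p.Prime] [CharP k p]
    [Algebra k[X] E] (K : Type*) [Field K] [Algebra k[X] K] [IsFractionRing k[X] K] [Algebra K E]
    [IsScalarTower k[X] K E] [Algebra.IsSeparable K E] (e : E) (he : e ^ p = algebraMap k[X] E X) :
    False := by
  have : CharP k[X] p := inferInstance
  have : CharP K p := charP_of_injective_algebraMap (IsFractionRing.injective k[X] K) p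
  have : ExpChar K p := ExpChar.prime hp.out
  have hmem : e ∈ perfectClosure K E := by
    rw [mem_perfectClosure_iff_pow_mem p]
    exact ⟨1, algebraMap k[X] K X, by rw [pow_one, he, ← IsScalarTower.algebraMap_apply]⟩
  rw [perfectClosure.eq_bot_of_isSeparable, IntermediateField.mem_bot] at hmem
  obtain ⟨e', rfl⟩ := hmem
  have he' : e' ^ p = algebraMap k[X] K X := by
    apply (algebraMap K E).injective
    rw [map_pow, he, ← IsScalarTower.algebraMap_apply]
  have hIntegral : IsIntegral k[X] e' := by
    refine IsIntegral.of_pow hp.out.pos ?_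
    rw [he']; exact isIntegral_algebraMap
  obtain ⟨f, rfl⟩ := IsIntegrallyClosed.isIntegral_iff.1 hIntegral
  rw [← map_pow] at he'
  have h := congrArg natDegree (IsFractionRing.injective k[X] K he')
  rw [natDegree_pow, natDegree_X] at h
  exact hp.out.one_lt.ne' (Nat.eq_one_of_mul_eq_one_right h)

/-- If `x` is not a `p`-th power, its degree over the field of `p^e`-th powers is at least `p^e`. -/
lemma natDegree_minpoly_frob {E : Type*} [Field E] (p : ℕ) [hp : Fact p.Prime] [CharP E p] (n : ℕ)
    (x : E) (hx : ∀ e : E, e ^ p ≠ x) :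
    p ^ n ≤ (minpoly (iterateFrobenius E p n).fieldRange x).natDegree := by
  set F := (iterateFrobenius E p n).fieldRange with hF
  have : CharP F p := charP_of_injective_algebraMap (algebraMap F E).injective p |> fun _ =>
    (algebraMap F E).charP (algebraMap F E).injective p
  have : ExpChar F p := ExpChar.prime hp.out
  have hIntegral : IsIntegral F x := by
    refine IsIntegral.of_pow (n := p ^ n) (pow_pos hp.out.pos n) ?_
    have : x ^ p ^ n = algebraMap F E ⟨x ^ p ^ n, ⟨x, by simp [iterateFrobenius_def]⟩⟩ := rfl
    rw [this]; exact isIntegral_algebraMap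
  have hsep : (minpoly F x).natSepDegree = 1 := by
    rw [minpoly.natSepDegree_eq_one_iff_pow_mem p]
    exact ⟨n, ⟨x ^ p ^ n, ⟨x, by simp [iterateFrobenius_def]⟩⟩, rfl⟩
  obtain ⟨s, y, -, hs⟩ := Monic.eq_X_pow_char_pow_sub_C_of_natSepDegree_eq_one_of_irreducible p
    (minpoly.monic hIntegral) (minpoly.irreducible hIntegral) hsep
  have hdeg : (minpoly F x).natDegree = p ^ s := by
    rw [hs, natDegree_X_pow_sub_C]
  rw [hdeg]
  by_contra hlt
  have hsn : s < n := by
    by_contra h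
    exact hlt (Nat.pow_le_pow_right hp.out.pos (by omega))
  have hev := minpoly.aeval F x
  rw [hs] at hev
  simp only [map_sub, map_pow, aeval_X, aeval_C, sub_eq_zero] at hev
  obtain ⟨y, e, rfl⟩ := y
  have he : x ^ p ^ s = e ^ p ^ n := by rw [hev]; exact iterateFrobenius_def ..
  obtain ⟨d, rfl⟩ : ∃ d, n = d + 1 + s := ⟨n - s - 1, by omega⟩
  rw [pow_add p, pow_mul] at he
  have := iterateFrobenius_inj E p s (a₁ := x) (a₂ := e ^ p ^ (d + 1)) (by
    simpa [iterateFrobenius_def] using he)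
  exact hx (e ^ p ^ d) (by rw [this, pow_succ, pow_mul])

end Felg

end part2

section part3
open Polynomial

namespace Felg

/-- Evaluation of a bivariate polynomial. -/
noncomputable def ev2 {R S : Type*} [CommRing R] [CommRing S] (f : R →+* S) (x y : S) : R[X][X] →+* S :=
  eval₂RingHom (eval₂RingHom f x) y

section ev2
variable {R S T : Type*} [CommRing R] [CommRing S] [CommRing T]

@[simp] lemma ev2_C (f : R →+* S) (x y : S) (a : R[X]) : ev2 f x y (C a) = a.eval₂ f x := by
  simp [ev2]

@[simp] lemma ev2_X (f : R →+* S) (x y : S) : ev2 f x y X = y := by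
  simp [ev2]

lemma ev2_map (h : R →+* S) (f : S →+* T) (x y : T) (P : R[X][X]) :
    ev2 f x y (P.map (mapRingHom h)) = ev2 (f.comp h) x y P := by
  simp only [ev2, coe_eval₂RingHom, eval₂_map]
  congr 1
  ext <;> simp

lemma map_ev2 (f : R →+* S) (h : S →+* T) (x y : S) (P : R[X][X]) :
    h (ev2 f x y P) = ev2 (h.comp f) (h x) (h y) P := by
  have : h.comp (ev2 f x y) = ev2 (h.comp f) (h x) (h y) := by
    ext <;> simp [ev2]
  exact RingHom.congr_fun this P

lemma ev2_eq (f : R →+* S) (x y : S) (P : R[X][X]) :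
    ev2 f x y P = (P.map (eval₂RingHom f x)).eval y := by
  simp [ev2, eval_map]

end ev2

lemma indep_powers {k E : Type*} [Field k] [IsAlgClosed k] [Field E] (p : ℕ) [hp : Fact p.Prime]
    [CharP k p] (i : k →+* E) (n : ℕ) (x y : E) (hx : ∀ e : E, e ^ p ≠ x)
    {g : k[X][X]} (hg : g.Monic) (hirr : Irreducible g) {c : ℕ} (hc : XD c g)
    (hgy : ev2 i x y g = 0) {l : ℕ} (hl : g.natDegree * (l + c * (2 * g.natDegree)) < p ^ n)
    (V : Fin (l + 1) × Fin g.natDegree → E)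
    (hV : ∑ t, x ^ (t.1 : ℕ) * y ^ (t.2 : ℕ) * V t ^ p ^ n = 0) (t) : V t = 0 := by
  classical
  have : CharP E p := charP_of_injective_ringHom i.injective p
  set F := (iterateFrobenius E p n).fieldRange with hF
  have hk : ∀ a : k, i a ∈ F := by
    intro a
    obtain ⟨b, rfl⟩ := IsAlgClosed.exists_pow_nat_eq a (pow_pos hp.out.pos n)
    exact ⟨i b, by simp [iterateFrobenius_def]⟩
  let κ : k →+* F := i.codRestrict F hk
  have hκ : F.subtype.comp κ = i := by ext; rfl
  by_contra ht
  have hn : g.natDegree ≠ 0 := fun h => (Fin.cast h t.2).elim0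
  set G := g.map (mapRingHom κ) with hG
  have hGm : G.Monic := hg.map _
  have hGn : G.natDegree = g.natDegree := hg.natDegree_map _
  have hGi : Irreducible G := irreducible_map κ hg hirr
  have hGc : XD c G := fun j => by
    rw [hG, coeff_map]; exact (natDegree_map_le).trans (hc j)
  let U : Fin (l + 1) × Fin g.natDegree → F := fun t => ⟨V t ^ p ^ n, ⟨V t, by simp [iterateFrobenius_def]⟩⟩
  have hU : ∀ t, algebraMap F E (U t) = V t ^ p ^ n := fun _ => rfl
  set P : F[X][X] := ∑ t, C (C (U t) * X ^ (t.1 : ℕ)) * X ^ (t.2 : ℕ) with hP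
  have hPdeg : P.natDegree < G.natDegree := by
    rw [hGn]
    refine lt_of_le_of_lt (natDegree_sum_le_of_forall_le (n := g.natDegree - 1) _ _ fun t _ => ?_) (by omega)
    refine (natDegree_C_mul_X_pow_le _ _).trans ?_
    have := t.2.2
    omega
  have hPc : XD l P := XD.sum _ fun t _ => by
    have h1 : XD l (C (C (U t) * X ^ (t.1 : ℕ))) := XD.C ((natDegree_C_mul_X_pow_le _ _).trans (by
      have := t.1.2; omega))
    simpa using h1.mul (XD.Xpow (s := 0) (t.2 : ℕ))
  have hP0 : P ≠ 0 := by
    intro h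
    have h1 : (P.coeff (t.2 : ℕ)).coeff (t.1 : ℕ) = U t := by
      simp only [hP, finsetSum_coeff, coeff_C_mul, coeff_X_pow, mul_ite, mul_one, mul_zero]
      rw [Finset.sum_eq_single t]
      · simp
      · intro b _ hb
        by_cases h1 : (t.2 : ℕ) = b.2
        · rw [if_pos h1, coeff_C_mul, coeff_X_pow, if_neg, mul_zero]
          intro h2
          exact hb (Prod.ext (Fin.ext h2.symm) (Fin.ext h1.symm))
        · rw [if_neg h1, coeff_zero]
      · simp
    rw [h] at h1
    have h2 := hU t
    rw [← h1] at h2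
    simp at h2
    exact ht ((pow_eq_zero_iff (pow_pos hp.out.pos n).ne').1 h2.symm)
  have hndvd : ¬ G ∣ P := fun h => by
    have := natDegree_le_of_dvd h hP0
    omega
  let φ : F[X][X] →ₐ[F] E := { ev2 (algebraMap F E) x y with
    commutes' := fun r => by
      change ev2 (algebraMap F E) x y (C (C r)) = _
      simp }
  have hφ : ∀ Q, φ Q = ev2 (algebraMap F E) x y Q := fun _ => rfl
  have hM : ∀ b < G.natDegree, XD (l + c * (2 * g.natDegree)) ((P * X ^ b) %ₘ G) := by
    intro b hb
    refine XD.mod hGm hGc _ _ _ ?_ ?_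
    · refine natDegree_mul_le.trans ?_
      rw [natDegree_X_pow]; omega
    · simpa using hPc.mul (XD.Xpow (s := 0) b)
  have hli : LinearIndependent F (fun s : Fin (p ^ n) => x ^ (s : ℕ)) := by
    have h1 := linearIndependent_pow (K := F) x
    have h2 := natDegree_minpoly_frob p n x hx
    exact h1.comp (Fin.castLE h2) (Fin.castLE_injective h2)
  have := zero_count hGm hGi hndvd hM φ (by
      rw [hφ, hG, ev2_map]
      exact hgy) (by
      rw [hφ, hP, map_sum, ← hV]
      refine Finset.sum_congr rfl fun t _ => ?_
      rw [map_mul, map_pow, ev2_C, ev2_X, eval₂_mul, eval₂_C, eval₂_X_pow, hU]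
      ring) _ hli (fun s => ⟨C (X ^ (s : ℕ)), by rw [hφ]; simp⟩)
  rw [Fintype.card_fin, hGn] at this
  omega

lemma point_count {k : Type*} [Field k] {g h : k[X][X]} (hg : g.Monic) (hirr : Irreducible g)
    (hh : ¬ g ∣ h) {M : ℕ} (hM : ∀ b < g.natDegree, XD M ((h * X ^ b) %ₘ g))
    (S : Finset (k × k)) (hS : ∀ P ∈ S, ev2 (RingHom.id k) P.1 P.2 g = 0)
    (hS' : ∀ P ∈ S, ev2 (RingHom.id k) P.1 P.2 h = 0) : S.card ≤ g.natDegree * M := by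
  classical
  let φ : k[X][X] →ₐ[k] (S → k) := { (RingHom.pi fun P : S => ev2 (RingHom.id k) P.1.1 P.1.2) with
    commutes' := fun r => by
      funext P
      change ev2 (RingHom.id k) P.1.1 P.1.2 (C (C r)) = _
      simp }
  have hφ : ∀ Q P, φ Q P = ev2 (RingHom.id k) P.1.1 P.1.2 Q := fun _ _ => rfl
  have hli : LinearIndependent k (fun P : S => (Pi.single P 1 : S → k)) := by
    have := (Pi.basisFun k S).linearIndependent
    convert this using 2
    simp
  have := zero_count hg hirr hh hM φ (by funext P; rw [hφ]; exact hS _ P.2)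
    (by funext P; rw [hφ]; exact hS' _ P.2) _ hli (by
    intro P
    have hsep : ∀ P' : S, ∃ f : k[X][X], P' ≠ P → φ f P' = 0 ∧ φ f P = 1 := by
      intro P'
      by_cases hne : P' = P
      · exact ⟨0, fun h => absurd hne h⟩
      by_cases h1 : P'.1.1 = P.1.1
      · have h2 : P.1.2 - P'.1.2 ≠ 0 := by
          intro h2
          exact hne (Subtype.ext (Prod.ext h1 (sub_eq_zero.1 h2).symm))
        refine ⟨C (C (P.1.2 - P'.1.2)⁻¹) * (X - C (C P'.1.2)), fun _ => ⟨?_, ?_⟩⟩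
        · rw [hφ]; simp
        · rw [hφ]; simp [h2]
      · have h2 : P.1.1 - P'.1.1 ≠ 0 := by
          intro h2
          exact h1 (sub_eq_zero.1 h2).symm
        refine ⟨C (C (P.1.1 - P'.1.1)⁻¹ * (X - C P'.1.1)), fun _ => ⟨?_, ?_⟩⟩
        · rw [hφ]; simp
        · rw [hφ]; simp [h2]
    choose f hf using hsep
    refine ⟨∏ P' ∈ Finset.univ.erase P, f P', ?_⟩
    funext R
    rw [map_prod, Finset.prod_apply]
    by_cases hR : R = P
    · subst hR
      rw [Pi.single_eq_same]
      exact Finset.prod_eq_one fun P' hP' => (hf P' (Finset.ne_of_mem_erase hP')).2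
    · rw [Pi.single_eq_of_ne hR]
      exact Finset.prod_eq_zero (Finset.mem_erase.2 ⟨hR, Finset.mem_univ _⟩) (hf R hR).1)
  simpa using this

end Felg

end part3

section part4
open Polynomial

universe u

namespace Felg

/-- The function field of `g`. -/
lemma exists_function_field {k : Type u} [Field k] (p : ℕ) [hp : Fact p.Prime]
    [CharP k p] {g : k[X][X]} (hg : g.Monic) (hirr : Irreducible g)
    (α β : k[X][X]) (D : k[X]) (hD : D ≠ 0) (hab : α * g + β * derivative g = C D) :
    ∃ (E : Type u) (_ : Field E) (i : k →+* E) (x y : E), (∀ e : E, e ^ p ≠ x) ∧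
      ∀ P, ev2 i x y P = 0 ↔ g ∣ P := by
  let K := FractionRing k[X]
  set G : K[X] := g.map (algebraMap k[X] K) with hG
  have hGi : Irreducible G := (hg.irreducible_iff_irreducible_map_fraction_map).1 hirr
  have : Fact (Irreducible G) := ⟨hGi⟩
  have hGm : G.Monic := hg.map _
  have hinj : Function.Injective (algebraMap k[X] K) := IsFractionRing.injective k[X] K
  have hsep : G.Separable := by
    have hDK : algebraMap k[X] K D ≠ 0 := by
      rwa [Ne, map_eq_zero_iff _ hinj]
    have h1 := congrArg (Polynomial.map (algebraMap k[X] K)) hab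
    rw [Polynomial.map_add, Polynomial.map_mul, Polynomial.map_mul, ← derivative_map, map_C] at h1
    refine ⟨C (algebraMap k[X] K D)⁻¹ * α.map (algebraMap k[X] K),
      C (algebraMap k[X] K D)⁻¹ * β.map (algebraMap k[X] K), ?_⟩
    rw [mul_assoc, mul_assoc, ← mul_add, h1, ← C_mul, inv_mul_cancel₀ hDK, C_1]
  let E := AdjoinRoot G
  have hsepE : Algebra.IsSeparable K E := by
    have hroot : IsSeparable K (AdjoinRoot.root G) := by
      rw [IsSeparable, AdjoinRoot.minpoly_root hGi.ne_zero, hGm.leadingCoeff]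
      simpa using hsep
    have h1 : Algebra.IsSeparable K (IntermediateField.adjoin K {AdjoinRoot.root G}) :=
      (IntermediateField.isSeparable_adjoin_simple_iff_isSeparable K E).2 hroot
    have h2 : IntermediateField.adjoin K {AdjoinRoot.root G} = ⊤ := by
      rw [eq_top_iff, ← IntermediateField.toSubalgebra_le_toSubalgebra, IntermediateField.top_toSubalgebra,
        ← AdjoinRoot.adjoinRoot_eq_top]
      exact IntermediateField.algebra_adjoin_le_adjoin K _
    rw [h2] at h1
    exact Algebra.IsSeparable.of_algHom K (⊤ : IntermediateField K E)
      (IntermediateField.topEquiv.symm : E ≃ₐ[K] _).toAlgHom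
  refine ⟨E, inferInstance, (algebraMap k[X] E).comp C, algebraMap k[X] E X, AdjoinRoot.root G, ?_, ?_⟩
  · intro e he
    exact not_pth_power p K e he
  · intro P
    have h1 : ev2 ((algebraMap k[X] E).comp C) (algebraMap k[X] E X) (AdjoinRoot.root G) =
        (AdjoinRoot.mk G).comp (mapRingHom (algebraMap k[X] K)) := by
      ext
      · simp [ev2]; rfl
      · simp [ev2]; rfl
      · simp [ev2]
    rw [h1, RingHom.comp_apply, AdjoinRoot.mk_eq_zero]
    change g.map _ ∣ P.map _ ↔ _
    rw [map_dvd_map _ hinj hg]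

theorem upper {k : Type*} [Field k] [IsAlgClosed k] (p : ℕ) [hp : Fact p.Prime]
    [CharP k p] {g : k[X][X]} (hg : g.Monic) (hirr : Irreducible g)
    (α β : k[X][X]) (D : k[X]) (hD : D ≠ 0) (hab : α * g + β * derivative g = C D)
    {c : ℕ} (hc : XD c g) {n₀ : ℕ} (v v' : Fin n₀ → k[X][X]) (hv : ∀ j, XD c (v j))
    (hvd : ∀ j, (v j).natDegree ≤ c) (hv' : ∀ j, XD c (v' j)) (hvd' : ∀ j, (v' j).natDegree ≤ c)
    (hind : ∀ a : Fin n₀ → k[X], g ∣ ∑ j, C (a j) * v j → ∀ j, a j = 0)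
    (e q n l m : ℕ) (hq : q = p ^ e) (hn : g.natDegree = n)
    (hl : n * (l + c * (2 * n)) < q)
    (hm : m + q * l + c + c * (n * q + c) + 1 < (m + 1) * n₀ * (l + 1))
    (S : Finset (k × k)) (hSx : ∀ P ∈ S, P.1 ^ (q ^ 2) = P.1)
    (hSg : ∀ P ∈ S, ev2 (RingHom.id k) P.1 P.2 g = 0)
    (hSv : ∀ P ∈ S, ∃ u : k, ∀ j, (ev2 (RingHom.id k) P.1 P.2 (v j)) ^ (q ^ 2) =
      u * ev2 (RingHom.id k) P.1 P.2 (v' j)) :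
    S.card ≤ n * (l + q * (m + c) + c * (2 * n + q * c)) := by
  classical
  have hqpos : 0 < q := hq ▸ pow_pos hp.out.pos e
  have hn0 : 0 < n := by
    rw [← hn, Nat.pos_iff_ne_zero]
    intro h
    exact hirr.ne_one (hg.natDegree_eq_zero.1 h)
  set N := m + q * l + c + c * (n * q + c) with hN
  let ι := (Fin (m + 1) × Fin n₀) × (Fin (l + 1) × Fin n)
  let M₀ : ι → k[X][X] := fun t =>
    C (X ^ ((t.1.1 : ℕ) + q * (t.2.1 : ℕ))) * X ^ (q * (t.2.2 : ℕ)) * v' t.1.2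
  have hMX : ∀ t, XD N (M₀ t %ₘ g) := by
    intro t
    refine XD.mod hg hc (n * q + c) (m + q * l + c) _ ?_ ?_
    · refine natDegree_mul_le.trans (add_le_add ?_ (hvd' _))
      refine (natDegree_C_mul_X_pow_le _ _).trans ?_
      rw [mul_comm]; exact Nat.mul_le_mul_right _ t.2.2.2.le
    · have h1 : XD (m + q * l) (C (X ^ ((t.1.1 : ℕ) + q * (t.2.1 : ℕ)) : k[X])) := XD.C (by
        rw [natDegree_X_pow]
        exact add_le_add (by have := t.1.1.2; omega) (Nat.mul_le_mul_left _ (by have := t.2.1.2; omega)))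
      have h2 := (h1.mul (XD.Xpow (s := 0) (q * (t.2.2 : ℕ)))).mul (hv' t.1.2)
      rw [add_zero] at h2
      exact h2
  let T : ι → (Fin n × Fin (N + 1) → k) := fun t rs => ((M₀ t %ₘ g).coeff rs.1).coeff rs.2
  have hnli : ¬ LinearIndependent k T := by
    intro h
    have h1 := h.fintype_card_le_finrank
    simp only [Module.finrank_fintype_fun_eq_card, Fintype.card_prod, Fintype.card_fin, ι] at h1
    have h2 : (m + 1) * n₀ * ((l + 1) * n) = n * ((m + 1) * n₀ * (l + 1)) := by ring
    rw [h2] at h1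
    have := Nat.le_of_mul_le_mul_left h1 hn0
    omega
  rw [Fintype.not_linearIndependent_iff] at hnli
  obtain ⟨r, hr, t₀, ht₀⟩ := hnli
  have hdvd : g ∣ ∑ t, C (C (r t)) * M₀ t := by
    rw [← modByMonic_eq_zero_iff_dvd hg, ← modByMonicHom_apply, map_sum]
    have : ∀ t, modByMonicHom g (C (C (r t)) * M₀ t) = C (C (r t)) * (M₀ t %ₘ g) := by
      intro t
      rw [← smul_eq_C_mul, map_smul, smul_eq_C_mul, modByMonicHom_apply]
    simp only [this]
    ext a b
    rw [coeff_zero, coeff_zero, finsetSum_coeff, finsetSum_coeff]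
    simp only [coeff_C_mul]
    by_cases ha : a < n
    · by_cases hb : b < N + 1
      · have := congrFun hr (⟨a, ha⟩, ⟨b, hb⟩)
        simpa [T] using this
      · refine Finset.sum_eq_zero fun t _ => ?_
        rw [coeff_eq_zero_of_natDegree_lt (lt_of_le_of_lt (hMX t a) (by omega)), mul_zero]
    · refine Finset.sum_eq_zero fun t _ => ?_
      have : (M₀ t %ₘ g).coeff a = 0 := by
        apply coeff_eq_zero_of_degree_lt
        refine (degree_modByMonic_lt _ hg).trans_le ?_
        rw [degree_eq_natDegree hg.ne_zero, hn]
        exact_mod_cast not_lt.1 ha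
      rw [this]; simp
  have hroot : ∀ t, ∃ ε : k, ε ^ (q ^ 2) = r t := fun t =>
    IsAlgClosed.exists_pow_nat_eq _ (pow_pos hqpos 2)
  choose ε hε using hroot
  let H : ι → k[X][X] := fun t => C (C (ε t ^ q)) * (C (X ^ (t.2.1 : ℕ)) * X ^ (t.2.2 : ℕ)) *
    (C (X ^ (t.1.1 : ℕ)) * v t.1.2) ^ q
  set h := ∑ t, H t with hh
  have hzero : ∀ P ∈ S, ev2 (RingHom.id k) P.1 P.2 h = 0 := by
    intro P hP
    obtain ⟨u, hu⟩ := hSv P hP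
    have hx := hSx P hP
    have h1 : (ev2 (RingHom.id k) P.1 P.2 h) ^ q =
        u * ev2 (RingHom.id k) P.1 P.2 (∑ t, C (C (r t)) * M₀ t) := by
      rw [hh, map_sum, hq, sum_pow_char_pow, ← hq, map_sum, Finset.mul_sum]
      refine Finset.sum_congr rfl fun t _ => ?_
      simp only [H, M₀, map_mul, map_pow, ev2_C, ev2_X, eval₂_C, RingHom.id_apply, eval₂_X]
      rw [← hε t]
      have h2 := hu t.1.2
      calc _ = ε t ^ (q ^ 2) * (P.1 ^ (q * (t.2.1 : ℕ)) * P.2 ^ (q * (t.2.2 : ℕ))) *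
            ((P.1 ^ (q ^ 2)) ^ (t.1.1 : ℕ) * (ev2 (RingHom.id k) P.1 P.2 (v t.1.2)) ^ (q ^ 2)) := by ring
        _ = _ := by rw [h2, hx]; ring
    obtain ⟨w, hw⟩ := hdvd
    rw [hw, map_mul, hSg P hP, zero_mul, mul_zero] at h1
    exact (pow_eq_zero_iff hqpos.ne').1 h1
  have hndvd : ¬ g ∣ h := by
    intro hgh
    obtain ⟨E, _, i, x, y, hx, hE⟩ := exists_function_field p hg hirr α β D hD hab
    have hEchar : CharP E p := charP_of_injective_ringHom i.injective p
    have h0 := (hE h).2 hgh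
    let V : Fin (l + 1) × Fin g.natDegree → E := fun s => ∑ aj : Fin (m + 1) × Fin n₀,
      i (ε (aj, (s.1, Fin.cast hn s.2))) * (x ^ (aj.1 : ℕ) * ev2 i x y (v aj.2))
    have hV : ∑ s, x ^ (s.1 : ℕ) * y ^ (s.2 : ℕ) * V s ^ p ^ e = 0 := by
      rw [← h0, hh, map_sum, show ∑ t, ev2 i x y (H t) = ∑ s, ∑ aj, ev2 i x y (H (aj, s)) from
        Fintype.sum_prod_type_right _]
      refine Fintype.sum_equiv ((Equiv.refl _).prodCongr (finCongr hn)) _ _ fun s => ?_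
      simp only [V, sum_pow_char_pow, Finset.mul_sum]
      refine Finset.sum_congr rfl fun aj _ => ?_
      have hs : (((Equiv.refl (Fin (l + 1))).prodCongr (finCongr hn)) s : Fin (l + 1) × Fin n) =
        (s.1, Fin.cast hn s.2) := rfl
      rw [hs]
      simp [H, hq]
      ring
    have hV0 := indep_powers p i e x y hx hg hirr hc ((hE g).2 dvd_rfl) (l := l)
      (by rw [hn, ← hq]; exact hl) V hV
    have hs := hV0 (t₀.2.1, Fin.cast hn.symm t₀.2.2)
    have hs' : ev2 i x y (∑ j, C (∑ a : Fin (m + 1), C (ε ((a, j), t₀.2)) * X ^ (a : ℕ)) * v j) = 0 := by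
      rw [← hs, map_sum]
      simp only [V]
      rw [Fintype.sum_prod_type_right]
      refine Finset.sum_congr rfl fun j _ => ?_
      rw [map_mul, ev2_C, eval₂_finsetSum, Finset.sum_mul]
      refine Finset.sum_congr rfl fun a _ => ?_
      simp
      ring
    have := hind _ ((hE _).1 hs') t₀.1.2
    have hco := congrArg (fun f => f.coeff (t₀.1.1 : ℕ)) this
    simp only [finsetSum_coeff, coeff_C_mul, coeff_X_pow, coeff_zero] at hco
    rw [Finset.sum_eq_single t₀.1.1] at hco
    · simp at hco
      apply ht₀
      rw [← hε t₀, hco, zero_pow (pow_pos hqpos 2).ne']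
    · intro b _ hb
      rw [if_neg (fun h => hb (Fin.ext h.symm)), mul_zero]
    · simp
  have hM : ∀ b < g.natDegree, XD (l + q * (m + c) + c * (2 * n + q * c)) ((h * X ^ b) %ₘ g) := by
    intro b hb
    refine XD.mod hg hc _ _ _ ?_ ?_
    · refine natDegree_mul_le.trans ?_
      rw [natDegree_X_pow]
      have : h.natDegree ≤ n + q * c := by
        refine natDegree_sum_le_of_forall_le _ _ fun t _ => ?_
        refine natDegree_mul_le.trans (add_le_add ?_ ?_)
        · refine (natDegree_C_mul_le _ _).trans ((natDegree_C_mul_X_pow_le _ _).trans t.2.2.2.le)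
        · refine natDegree_pow_le.trans (Nat.mul_le_mul_left _ ?_)
          exact (natDegree_C_mul_le _ _).trans (hvd _)
      omega
    · have : XD (l + q * (m + c)) h := XD.sum _ fun t _ => by
        refine XD.mul ?_ (XD.pow ?_ q)
        · have h1 : XD 0 (C (C (ε t ^ q)) : k[X][X]) := XD.C (by simp)
          have h2 : XD l (C (X ^ (t.2.1 : ℕ)) : k[X][X]) := XD.C (by
            rw [natDegree_X_pow]; have := t.2.1.2; omega)
          simpa using h1.mul (h2.mul (XD.Xpow (s := 0) (t.2.2 : ℕ)))
        · have h2 : XD m (C (X ^ (t.1.1 : ℕ)) : k[X][X]) := XD.C (by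
            rw [natDegree_X_pow]; have := t.1.1.2; omega)
          exact h2.mul (hv _)
      simpa using this.mul (XD.Xpow (s := 0) b)
  have := point_count hg hirr hndvd hM S hSg hzero
  rwa [hn] at this

end Felg

end part4

section part5
open Polynomial

universe u

namespace Felg

lemma arith_choice (n n₀ c : ℕ) (h0 : 1 ≤ n₀) : ∃ q0 : ℕ, ∀ q, q0 ≤ q → ∃ l m : ℕ,
    n * (l + c * (2 * n)) < q ∧ m + q * l + c + c * (n * q + c) + 1 < (m + 1) * n₀ * (l + 1) ∧
    2 * n₀ ^ 2 * (n * (l + q * (m + c) + c * (2 * n + q * c))) ≤ n * q ^ 2 * (2 * n₀ + 1) := by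
  set l := 4 * n₀ * c * n + 1 with hl
  set K := c + c ^ 2 + 1 with hK
  refine ⟨n * (l + c * (2 * n)) + 1 + 4 * n₀ * K + 4 * n₀ ^ 2 * (l + 2 * c * n + c + c ^ 2), ?_⟩
  intro q hq
  have hpos : 0 < n₀ * l := Nat.mul_pos h0 (by omega)
  set m := (q * (l + c * n) + K) / (n₀ * l) with hm
  have hm1 : n₀ * l * m ≤ q * (l + c * n) + K := Nat.mul_div_le _ _
  have hm2 : q * (l + c * n) + K < n₀ * l * (m + 1) := Nat.lt_mul_div_succ _ hpos
  refine ⟨l, m, ?_, ?_, ?_⟩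
  · omega
  · have h1 : (m + 1) * n₀ * (l + 1) = n₀ * l * (m + 1) + (m + 1) * n₀ := by ring
    have h2 : m + 1 ≤ (m + 1) * n₀ := Nat.le_mul_of_pos_right _ h0
    have h3 : m + q * l + c + c * (n * q + c) + 1 = q * (l + c * n) + K + m := by rw [hK]; ring
    omega
  · have hlpos : 0 < 2 * l := by omega
    have key : 2 * n₀ ^ 2 * (l + q * (m + c) + c * (2 * n + q * c)) ≤ q ^ 2 * (2 * n₀ + 1) := by
      refine Nat.le_of_mul_le_mul_left ?_ hlpos
      have hq1 : 1 ≤ q := le_trans (by omega) hq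
      have hq2 : 4 * n₀ * K + 4 * n₀ ^ 2 * (l + 2 * c * n + c + c ^ 2) ≤ q := le_trans (by omega) hq
      have hl1 : 1 ≤ l := by omega
      have e1 : 4 * n₀ * q * (n₀ * l * m) ≤ 4 * n₀ * q * (q * (l + c * n) + K) :=
        Nat.mul_le_mul_left _ hm1
      have e2 : 4 * n₀ * c * n * q ^ 2 ≤ l * q ^ 2 := Nat.mul_le_mul_right _ (by omega)
      have e3 : l * q * (4 * n₀ * K + 4 * n₀ ^ 2 * (l + 2 * c * n + c + c ^ 2)) ≤ l * q * q :=
        Nat.mul_le_mul_left _ hq2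
      have e4 : 4 * n₀ * q * K ≤ l * (4 * n₀ * q * K) := Nat.le_mul_of_pos_left _ hl1
      have e5 : 4 * n₀ ^ 2 * l * (l + 2 * c * n) ≤ q * (4 * n₀ ^ 2 * l * (l + 2 * c * n)) :=
        Nat.le_mul_of_pos_left _ hq1
      nlinarith
    calc 2 * n₀ ^ 2 * (n * (l + q * (m + c) + c * (2 * n + q * c)))
        = n * (2 * n₀ ^ 2 * (l + q * (m + c) + c * (2 * n + q * c))) := by ring
      _ ≤ n * (q ^ 2 * (2 * n₀ + 1)) := Nat.mul_le_mul_left _ key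
      _ = _ := by ring

theorem upper_asymp (n n₀ c : ℕ) (h0 : 1 ≤ n₀) : ∃ q0 : ℕ, ∀ {k : Type u} [Field k] [IsAlgClosed k]
    (p : ℕ) [Fact p.Prime]
    [CharP k p] {g : k[X][X]} (_ : g.Monic) (_ : Irreducible g)
    (α β : k[X][X]) (D : k[X]) (_ : D ≠ 0) (_ : α * g + β * derivative g = C D)
    (_ : XD c g) (v v' : Fin n₀ → k[X][X]) (_ : ∀ j, XD c (v j))
    (_ : ∀ j, (v j).natDegree ≤ c) (_ : ∀ j, XD c (v' j)) (_ : ∀ j, (v' j).natDegree ≤ c)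
    (_ : ∀ a : Fin n₀ → k[X], g ∣ ∑ j, C (a j) * v j → ∀ j, a j = 0)
    (e q : ℕ) (_ : q = p ^ e) (_ : q0 ≤ q) (_ : g.natDegree = n)
    (S : Finset (k × k)) (_ : ∀ P ∈ S, P.1 ^ (q ^ 2) = P.1)
    (_ : ∀ P ∈ S, ev2 (RingHom.id k) P.1 P.2 g = 0)
    (_ : ∀ P ∈ S, ∃ u : k, ∀ j, (ev2 (RingHom.id k) P.1 P.2 (v j)) ^ (q ^ 2) =
      u * ev2 (RingHom.id k) P.1 P.2 (v' j)),
    2 * n₀ ^ 2 * S.card ≤ n * q ^ 2 * (2 * n₀ + 1) := by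
  obtain ⟨q0, hq0⟩ := arith_choice n n₀ c h0
  refine ⟨q0, ?_⟩
  intro k _ _ p hp _ g hg hirr α β D hD hab hc v v' hv hvd hv' hvd' hind e q hq hqq hn S h1 h2 h3
  obtain ⟨l, m, hl, hm, hf⟩ := hq0 q hqq
  exact (Nat.mul_le_mul_left _ (upper p hg hirr α β D hD hab hc v v' hv hvd hv' hvd' hind e q n l m
    hq hn hl hm S h1 h2 h3)).trans hf

end Felg

end part5

section part6
open Polynomial

universe u

namespace Felg

/-- The kernel of evaluation at `(c, z)` is generated by the minimal polynomial. -/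
lemma ker_ev2 {A E : Type*} [Field A] [Field E] (i : A →+* E) (c z : E)
    (hc : ∀ f : A[X], f.eval₂ i c = 0 → f = 0) {g : A[X][X]} (hg : g.Monic) (hirr : Irreducible g)
    (hz : ev2 i c z g = 0) (P : A[X][X]) (hP : ev2 i c z P = 0) : g ∣ P := by
  let φ : A[X] →+* E := eval₂RingHom i c
  have hφ : Function.Injective φ := (injective_iff_map_eq_zero φ).2 hc
  let K := FractionRing A[X]
  let ψ : K →+* E := IsFractionRing.lift hφ
  have hψ : ψ.comp (algebraMap A[X] K) = φ := by
    exact RingHom.ext fun x => IsFractionRing.lift_algebraMap hφ x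
  let _ : Algebra K E := ψ.toAlgebra
  have hev : ∀ Q : A[X][X], aeval z (Q.map (algebraMap A[X] K)) = ev2 i c z Q := by
    intro Q
    rw [aeval_def, eval₂_map]
    change eval₂ (ψ.comp (algebraMap A[X] K)) z Q = _
    rw [hψ]; rfl
  have hG : Irreducible (g.map (algebraMap A[X] K)) :=
    (hg.irreducible_iff_irreducible_map_fraction_map).1 hirr
  have h1 := minpoly.eq_of_irreducible_of_monic hG (x := z) (by rw [hev, hz]) (hg.map _)
  have h2 := minpoly.dvd K z (p := P.map (algebraMap A[X] K)) (by rw [hev, hP])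
  rw [← h1, map_dvd_map _ (IsFractionRing.injective A[X] K) hg] at h2
  exact h2

lemma card_frob_roots {k : Type*} [Field k] [IsAlgClosed k] (p : ℕ) [hp : Fact p.Prime] [CharP k p]
    (m : ℕ) (hm : m ≠ 0) : ∃ F : Finset k, F.card = p ^ m ∧ ∀ x, x ∈ F ↔ x ^ p ^ m = x := by
  classical
  have h1 : 1 < p ^ m := Nat.one_lt_pow hm hp.out.one_lt
  have hd := FiniteField.X_pow_card_sub_X_natDegree_eq k h1
  have hne := FiniteField.X_pow_card_sub_X_ne_zero k h1
  have hs : (X ^ p ^ m - X : k[X]).Separable := galois_poly_separable p (p ^ m) (dvd_pow_self p hm)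
  refine ⟨(X ^ p ^ m - X : k[X]).roots.toFinset, ?_, ?_⟩
  · rw [Multiset.toFinset_card_of_nodup (nodup_roots hs), IsAlgClosed.card_roots_eq_natDegree, hd]
  · intro x
    rw [Multiset.mem_toFinset, mem_roots hne]
    simp [sub_eq_zero]

theorem finite_point (n n₀ c : ℕ) (h0 : 1 ≤ n₀) : ∃ q0 : ℕ, ∀ {k : Type u} [Field k] [IsAlgClosed k]
    (p : ℕ) [Fact p.Prime]
    [CharP k p] {g : k[X][X]} (_ : g.Monic) (_ : Irreducible g)
    (α β : k[X][X]) (D : k[X]) (_ : D ≠ 0) (_ : α * g + β * derivative g = C D)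
    (_ : XD c g) (_ : D.natDegree ≤ c) (_ : g.natDegree = n)
    (g₀ f : k[X][X]) (_ : g₀.Monic) (_ : Irreducible g₀) (_ : g₀.natDegree = n₀)
    (_ : XD c f) (_ : f.natDegree ≤ c)
    (_ : g ∣ ∑ j ∈ Finset.range (n₀ + 1), C (g₀.coeff j) * f ^ j * C D ^ (n₀ - j))
    (h : Fin n₀ → k[X][X]) (_ : ∀ t, XD c (h t)) (_ : ∀ t, (h t).natDegree ≤ c)
    (e q : ℕ) (_ : q = p ^ e) (_ : e ≠ 0) (_ : q0 ≤ q)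
    (_ : ∀ x y : k, x ^ (q ^ 2) = x → ev2 (RingHom.id k) x y g = 0 → D.eval x ≠ 0 →
      ∃ t, (ev2 (RingHom.id k) x y f / D.eval x) ^ (q ^ 2) = ev2 (RingHom.id k) x y (h t) / D.eval x)
    (t : Fin n₀),
    ∃ x y : k, x ^ (q ^ 2) = x ∧ x ^ q ≠ x ∧ ev2 (RingHom.id k) x y g = 0 ∧ D.eval x ≠ 0 ∧
      (ev2 (RingHom.id k) x y f / D.eval x) ^ (q ^ 2) = ev2 (RingHom.id k) x y (h t) / D.eval x := by
  classical
  obtain ⟨q0, hq0⟩ := upper_asymp.{u} n n₀ (c * (n₀ + 1)) h0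
  refine ⟨max q0 (2 * n₀ ^ 2 * (1 + c) + 1), ?_⟩
  intro k _ _ p hp _ g hg hirr α β D hD hab hc hDc hn g₀ f hg₀ hirr₀ hn₀ hfX hfd hgf h hhX hhd e q hq he
    hqq hcov t₀
  have hQ : q ^ 2 = p ^ (e * 2) := by rw [hq, pow_mul]
  by_contra hcon
  push Not at hcon
  obtain ⟨FQ, hFQ, hFQm⟩ := card_frob_roots (k := k) p (e * 2) (by omega)
  obtain ⟨Fq, hFq, hFqm⟩ := card_frob_roots (k := k) p e he
  rw [← hQ] at hFQ hFQm
  rw [← hq] at hFq hFqm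
  let Rt : k → Finset k := fun x => (g.map (evalRingHom x)).roots.toFinset
  have hgx : ∀ x, (g.map (evalRingHom x)).Monic := fun x => hg.map _
  have hev : ∀ x y P, ev2 (RingHom.id k) x y P = (P.map (evalRingHom x)).eval y := fun x y P => by
    rw [ev2_eq]; rfl
  have hRt : ∀ x y, y ∈ Rt x ↔ ev2 (RingHom.id k) x y g = 0 := by
    intro x y
    rw [hev]
    simp only [Rt, Multiset.mem_toFinset, mem_roots (hgx x).ne_zero, IsRoot.def]
  have hRc : ∀ x, (Rt x).card ≤ n := by
    intro x
    refine (Multiset.toFinset_card_le _).trans ((card_roots' _).trans ?_)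
    rw [hg.natDegree_map, hn]
  have hRc' : ∀ x, D.eval x ≠ 0 → (Rt x).card = n := by
    intro x hx
    have hsep : (g.map (evalRingHom x)).Separable := by
      have h1 := congrArg (Polynomial.map (evalRingHom x)) hab
      rw [Polynomial.map_add, Polynomial.map_mul, Polynomial.map_mul, ← derivative_map, map_C] at h1
      refine ⟨C (D.eval x)⁻¹ * α.map (evalRingHom x), C (D.eval x)⁻¹ * β.map (evalRingHom x), ?_⟩
      rw [mul_assoc, mul_assoc, ← mul_add, h1, ← C_mul, coe_evalRingHom, inv_mul_cancel₀ hx, C_1]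
    rw [Multiset.toFinset_card_of_nodup (nodup_roots hsep), IsAlgClosed.card_roots_eq_natDegree,
      hg.natDegree_map, hn]
  let GD := FQ.filter (fun x => D.eval x ≠ 0)
  have hGD : q ^ 2 ≤ GD.card + c := by
    have h1 := Finset.card_filter_add_card_filter_not (s := FQ) (fun x => D.eval x ≠ 0)
    have h2 : (FQ.filter (fun x => ¬ D.eval x ≠ 0)).card ≤ c := by
      have : FQ.filter (fun x => ¬ D.eval x ≠ 0) ⊆ D.roots.toFinset := by
        intro x hx
        simp only [Finset.mem_filter, not_not] at hx
        rw [Multiset.mem_toFinset, mem_roots hD]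
        exact hx.2
      exact (Finset.card_le_card this).trans ((Multiset.toFinset_card_le _).trans ((card_roots' _).trans hDc))
    have h3 : GD.card = (FQ.filter (fun x => D.eval x ≠ 0)).card := rfl
    omega
  let toP : Finset (Σ _ : k, k) → Finset (k × k) := fun s => s.map (Equiv.sigmaEquivProd k k).toEmbedding
  have htoP : ∀ s P, P ∈ toP s ↔ (⟨P.1, P.2⟩ : Σ _ : k, k) ∈ s := by
    intro s P
    simp only [toP, Finset.mem_map]
    constructor
    · rintro ⟨a, ha, rfl⟩; exact ha
    · intro h; exact ⟨_, h, rfl⟩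
  let All := toP (GD.sigma Rt)
  have hAll : All.card = GD.card * n := by
    simp only [All, toP, Finset.card_map, Finset.card_sigma]
    exact Finset.sum_const_nat fun x hx => hRc' x (Finset.mem_filter.1 hx).2
  have hAllm : ∀ P, P ∈ All ↔ (P.1 ^ (q ^ 2) = P.1 ∧ D.eval P.1 ≠ 0) ∧
      ev2 (RingHom.id k) P.1 P.2 g = 0 := by
    intro P
    simp only [All, htoP, Finset.mem_sigma, hRt, GD, Finset.mem_filter, hFQm]
  let S : Fin n₀ → Finset (k × k) := fun t => All.filter fun P =>
    (ev2 (RingHom.id k) P.1 P.2 f / D.eval P.1) ^ (q ^ 2) = ev2 (RingHom.id k) P.1 P.2 (h t) / D.eval P.1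
  have hSsub : All ⊆ Finset.univ.biUnion S := by
    intro P hP
    have h1 := (hAllm P).1 hP
    obtain ⟨t, ht⟩ := hcov P.1 P.2 h1.1.1 h1.2 h1.1.2
    exact Finset.mem_biUnion.2 ⟨t, Finset.mem_univ _, Finset.mem_filter.2 ⟨hP, ht⟩⟩
  have hcard1 : All.card ≤ ∑ t, (S t).card := (Finset.card_le_card hSsub).trans Finset.card_biUnion_le
  have hS0 : (S t₀).card ≤ q * n := by
    have : S t₀ ⊆ toP (Fq.sigma Rt) := by
      intro P hP
      rw [Finset.mem_filter, hAllm] at hP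
      rw [htoP, Finset.mem_sigma, hFqm, hRt]
      refine ⟨?_, hP.1.2⟩
      by_contra hne
      exact hcon P.1 P.2 hP.1.1.1 hne hP.1.2 hP.1.1.2 hP.2
    refine (Finset.card_le_card this).trans ?_
    simp only [toP, Finset.card_map, Finset.card_sigma]
    refine (Finset.sum_le_card_nsmul _ _ n fun x _ => hRc x).trans ?_
    rw [hFq, smul_eq_mul]
  have hbound : ∀ t, 2 * n₀ ^ 2 * (S t).card ≤ n * q ^ 2 * (2 * n₀ + 1) := by
    intro t
    have hcc : c ≤ c * (n₀ + 1) := Nat.le_mul_of_pos_right _ (by omega)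
    have hXv : ∀ F : k[X][X], XD c F → ∀ j : Fin n₀, XD (c * (n₀ + 1)) (F ^ (j : ℕ) * C D ^ (n₀ - 1 - j)) := by
      intro F hF j
      refine ((hF.pow _).mul ((XD.C hDc).pow _)).mono ?_
      rw [← add_mul, mul_comm]
      exact Nat.mul_le_mul_left _ (by omega)
    have hdv : ∀ F : k[X][X], F.natDegree ≤ c → ∀ j : Fin n₀,
        (F ^ (j : ℕ) * C D ^ (n₀ - 1 - j)).natDegree ≤ c * (n₀ + 1) := by
      intro F hF j
      rw [← C_pow]
      refine natDegree_mul_le.trans ?_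
      rw [natDegree_C, add_zero]
      refine natDegree_pow_le.trans ?_
      rw [mul_comm]
      exact Nat.mul_le_mul hF (by omega)
    refine hq0 p hg hirr α β D hD hab (hc.mono hcc)
      (fun j => f ^ (j : ℕ) * C D ^ (n₀ - 1 - j)) (fun j => (h t) ^ (j : ℕ) * C D ^ (n₀ - 1 - j))
      (hXv f hfX) (hdv f hfd) (hXv _ (hhX t)) (hdv _ (hhd t)) ?_ e q hq (le_trans (le_max_left _ _) hqq) hn
      (S t) ?_ ?_ ?_
    · intro a ha
      obtain ⟨E, _, i, x, y, -, hE⟩ := exists_function_field p hg hirr α β D hD hab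
      have hx : ∀ F : k[X], F.eval₂ i x = 0 → F = 0 := by
        intro F hF
        by_contra hne
        have h1 := (hE (C F)).1 (by rw [ev2_C, hF])
        have h2 := natDegree_le_of_dvd h1 (by rwa [Ne, C_eq_zero])
        rw [natDegree_C, Nat.le_zero, hg.natDegree_eq_zero] at h2
        exact hirr.ne_one h2
      have hDx : D.eval₂ i x ≠ 0 := fun h => hD (hx D h)
      set w := ev2 i x y f / D.eval₂ i x with hw
      have hfw : ev2 i x y f = w * D.eval₂ i x := by rw [hw, div_mul_cancel₀ _ hDx]
      have hg₀w : ev2 i x w g₀ = 0 := by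
        have h1 := (hE _).2 hgf
        rw [map_sum] at h1
        have h2 : ∀ j ∈ Finset.range (n₀ + 1), ev2 i x y (C (g₀.coeff j) * f ^ j * C D ^ (n₀ - j)) =
            (D.eval₂ i x) ^ n₀ * ((g₀.coeff j).eval₂ i x * w ^ j) := by
          intro j hj
          rw [Finset.mem_range] at hj
          rw [map_mul, map_mul, map_pow, map_pow, ev2_C, ev2_C, hfw, mul_pow]
          have : (D.eval₂ i x) ^ n₀ = (D.eval₂ i x) ^ j * (D.eval₂ i x) ^ (n₀ - j) := by
            rw [← pow_add]; congr 1; omega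
          rw [this]; ring
        rw [Finset.sum_congr rfl h2, ← Finset.mul_sum] at h1
        have h3 := (mul_eq_zero.1 h1).resolve_left (pow_ne_zero _ hDx)
        rw [ev2, coe_eval₂RingHom, eval₂_eq_sum_range, hn₀]
        exact h3
      set P : k[X][X] := ∑ j : Fin n₀, C (a j) * X ^ (j : ℕ) with hP
      have hPw : ev2 i x w P = 0 := by
        have h1 := (hE _).2 ha
        rw [map_sum] at h1
        have h2 : ∀ j ∈ (Finset.univ : Finset (Fin n₀)), ev2 i x y (C (a j) * (f ^ (j : ℕ) * C D ^ (n₀ - 1 - j))) =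
            (D.eval₂ i x) ^ (n₀ - 1) * ((a j).eval₂ i x * w ^ (j : ℕ)) := by
          intro j _
          rw [map_mul, map_mul, map_pow, map_pow, ev2_C, ev2_C, hfw, mul_pow]
          have : (D.eval₂ i x) ^ (n₀ - 1) = (D.eval₂ i x) ^ (j : ℕ) * (D.eval₂ i x) ^ (n₀ - 1 - j) := by
            rw [← pow_add]; congr 1; omega
          rw [this]; ring
        rw [Finset.sum_congr rfl h2, ← Finset.mul_sum] at h1
        have h3 := (mul_eq_zero.1 h1).resolve_left (pow_ne_zero _ hDx)
        rw [hP, map_sum, ← h3]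
        refine Finset.sum_congr rfl fun j _ => ?_
        rw [map_mul, map_pow, ev2_C, ev2_X]
      have hdvd := ker_ev2 i x w hx hg₀ hirr₀ hg₀w P hPw
      have hP0 : P = 0 := by
        by_contra hne
        have h1 := natDegree_le_of_dvd hdvd hne
        have h2 : P.natDegree ≤ n₀ - 1 := natDegree_sum_le_of_forall_le _ _ fun j _ =>
          (natDegree_C_mul_X_pow_le _ _).trans (by omega)
        omega
      intro j
      have h1 := congrArg (fun F => coeff F (j : ℕ)) hP0
      simp only [hP, finsetSum_coeff, coeff_C_mul, coeff_X_pow, coeff_zero] at h1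
      rw [Finset.sum_eq_single j] at h1
      · simpa using h1
      · intro b _ hb
        rw [if_neg (fun h => hb (Fin.ext h.symm)), mul_zero]
      · simp
    · intro P hP; exact ((hAllm P).1 (Finset.mem_filter.1 hP).1).1.1
    · intro P hP; exact ((hAllm P).1 (Finset.mem_filter.1 hP).1).2
    · intro P hP
      have hDP := ((hAllm P).1 (Finset.mem_filter.1 hP).1).1.2
      have hfh := (Finset.mem_filter.1 hP).2
      set d := D.eval P.1 with hd
      refine ⟨(d ^ (q ^ 2)) ^ (n₀ - 1) / d ^ (n₀ - 1), fun j => ?_⟩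
      have hdd : D.eval₂ (RingHom.id k) P.1 = d := rfl
      rw [map_mul, map_mul, map_pow, map_pow, map_pow, ev2_C, hdd]
      rw [div_pow, div_eq_div_iff (pow_ne_zero _ hDP) hDP] at hfh
      have e1 : ∀ b : k, b ^ (n₀ - 1) = b ^ (j : ℕ) * b ^ (n₀ - 1 - (j : ℕ)) := by
        intro b; rw [← pow_add]; congr 1; omega
      rw [e1, e1 d]
      set r := n₀ - 1 - (j : ℕ)
      set F := ev2 (RingHom.id k) P.1 P.2 f
      set H := ev2 (RingHom.id k) P.1 P.2 (h t)
      have e2 : F ^ (q ^ 2) = H * d ^ (q ^ 2) / d := by rw [eq_div_iff hDP, hfh]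
      rw [mul_pow, ← pow_mul, mul_comm (j : ℕ), pow_mul, e2, ← pow_mul, mul_comm r, pow_mul]
      field_simp
      rw [← mul_pow, div_mul_cancel₀ _ hDP, mul_pow]
      ring
  have hn1 : 1 ≤ n := by
    rw [← hn, Nat.one_le_iff_ne_zero]
    intro h
    exact hirr.ne_one (hg.natDegree_eq_zero.1 h)
  have hsum : 2 * n₀ ^ 2 * ∑ t, (S t).card ≤ 2 * n₀ ^ 2 * (q * n) + (n₀ - 1) * (n * q ^ 2 * (2 * n₀ + 1)) := by
    rw [← Finset.add_sum_erase _ _ (Finset.mem_univ t₀), mul_add, Finset.mul_sum (s := Finset.univ.erase t₀)]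
    refine add_le_add (Nat.mul_le_mul_left _ hS0) ?_
    refine (Finset.sum_le_card_nsmul _ _ _ fun t _ => hbound t).trans ?_
    simp
  have hfin : 2 * n₀ ^ 2 * (GD.card * n) ≤
      2 * n₀ ^ 2 * (q * n) + (n₀ - 1) * (n * q ^ 2 * (2 * n₀ + 1)) :=
    (Nat.mul_le_mul_left _ (hAll ▸ hcard1)).trans hsum
  obtain ⟨r, rfl⟩ : ∃ r, n₀ = r + 1 := ⟨n₀ - 1, by omega⟩
  have hfin2 : 2 * (r + 1) ^ 2 * GD.card ≤ 2 * (r + 1) ^ 2 * q + r * (q ^ 2 * (2 * (r + 1) + 1)) := by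
    refine Nat.le_of_mul_le_mul_left ?_ hn1
    simp only [Nat.add_sub_cancel] at hfin
    calc _ = 2 * (r + 1) ^ 2 * (GD.card * n) := by ring
      _ ≤ _ := hfin
      _ = _ := by ring
  have h5 := Nat.mul_le_mul_left (2 * (r + 1) ^ 2) hGD
  have h6 : 2 * (r + 1) ^ 2 * (1 + c) + 1 ≤ q := le_trans (le_max_right _ _) hqq
  have h7 := Nat.mul_le_mul_right q h6
  have h8 : 2 * (r + 1) ^ 2 * c ≤ 2 * (r + 1) ^ 2 * c * q := Nat.le_mul_of_pos_right _ (by omega)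
  have h9 : 1 ≤ q := by omega
  nlinarith
end Felg

end part6

section part7
open Polynomial Filter

namespace Felg

section ultra
variable (K : ℕ → Type) [∀ i, Field (K i)] (U : Ultrafilter ℕ)

/-- The ideal of almost everywhere vanishing sequences. -/
def UI : Ideal (∀ i, K i) where
  carrier := {f | ∀ᶠ i in (U : Filter ℕ), f i = 0}
  add_mem' := by
    intro a b ha hb
    filter_upwards [ha, hb] with i h1 h2
    rw [Pi.add_apply, h1, h2, add_zero]
  zero_mem' := Eventually.of_forall fun _ => rfl
  smul_mem' := by
    intro c x hx
    filter_upwards [hx] with i h1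
    rw [smul_eq_mul, Pi.mul_apply, h1, mul_zero]

lemma mem_UI {f : ∀ i, K i} : f ∈ UI K U ↔ ∀ᶠ i in (U : Filter ℕ), f i = 0 := Iff.rfl

instance UI_max : (UI K U).IsMaximal := by
  classical
  rw [Ideal.isMaximal_iff]
  constructor
  · rw [mem_UI]
    intro h
    obtain ⟨i, hi⟩ := h.exists
    exact one_ne_zero hi
  · intro J x hJ hx hxJ
    rw [mem_UI, ← Ultrafilter.eventually_not] at hx
    have h1 : (fun i => if x i = 0 then 1 else 0 : ∀ i, K i) ∈ J := by
      apply hJ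
      rw [mem_UI]
      filter_upwards [hx] with i hi
      simp [hi]
    have h2 := J.add_mem h1 (J.mul_mem_left (fun i => (x i)⁻¹) hxJ)
    convert h2 using 1
    funext i
    by_cases h : x i = 0 <;> simp [h]

/-- The ultraproduct field. -/
abbrev UW : Type := (∀ i, K i) ⧸ UI K U

noncomputable instance : Field (UW K U) := Ideal.Quotient.field _

/-- The class of a sequence. -/
noncomputable abbrev um : (∀ i, K i) →+* UW K U := Ideal.Quotient.mk (UI K U)

lemma um_surj : Function.Surjective (um K U) := Ideal.Quotient.mk_surjective

lemma um_eq {f g : ∀ i, K i} : um K U f = um K U g ↔ ∀ᶠ i in (U : Filter ℕ), f i = g i := by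
  rw [Ideal.Quotient.mk_eq_mk_iff_sub_mem, mem_UI]
  simp [sub_eq_zero]

lemma um_eq_zero {f : ∀ i, K i} : um K U f = 0 ↔ ∀ᶠ i in (U : Filter ℕ), f i = 0 := by
  rw [← map_zero (um K U), um_eq]; rfl

/-- Projection to a coordinate. -/
abbrev pr (i : ℕ) : (∀ i, K i) →+* K i := Pi.evalRingHom K i

instance [∀ i, IsAlgClosed (K i)] : IsAlgClosed (UW K U) := by
  apply IsAlgClosed.of_exists_root
  intro P hP hirr
  have hl : P ∈ lifts (um K U) := by
    rw [lifts_iff_coeff_lifts]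
    exact fun n => um_surj K U _
  obtain ⟨Q, hQ, hQd, hQm⟩ := lifts_and_natDegree_eq_and_monic hl hP
  have hr : ∀ i, ∃ x : K i, (Q.map (pr K i)).eval x = 0 := by
    intro i
    refine IsAlgClosed.exists_root _ ?_
    intro h
    have h1 := hQm.natDegree_map (pr K i)
    rw [natDegree_eq_of_degree_eq_some h, hQd] at h1
    exact hirr.ne_one (hP.natDegree_eq_zero.1 h1.symm)
  choose x hx using hr
  refine ⟨um K U x, ?_⟩
  rw [← hQ, eval_map, eval₂_hom, um_eq_zero]
  refine Eventually.of_forall fun i => ?_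
  have := hx i
  rw [eval_map] at this
  rw [← this]
  exact (eval₂_hom (pr K i) x).symm

/-- The endomorphism induced by a sequence of endomorphisms. -/
noncomputable def urho (r : ∀ i, K i →+* K i) : UW K U →+* UW K U :=
  Ideal.Quotient.lift (UI K U) ((um K U).comp (RingHom.pi fun i => (r i).comp (pr K i))) (by
    intro a ha
    rw [RingHom.comp_apply, um_eq_zero]
    filter_upwards [(mem_UI K U).1 ha] with i hi
    change r i (a i) = 0
    rw [hi, map_zero])

lemma urho_um (r : ∀ i, K i →+* K i) (f : ∀ i, K i) :
    urho K U r (um K U f) = um K U (fun i => r i (f i)) := rfl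

lemma lift2 (P : (UW K U)[X][X]) : ∃ Q : (∀ i, K i)[X][X], Q.map (mapRingHom (um K U)) = P := by
  have := mem_lifts2 (um K U) P (fun _ _ => um_surj K U _)
  rw [mem_lifts] at this
  exact this

lemma lift2m (P : (UW K U)[X][X]) (hP : P.Monic) : ∃ Q : (∀ i, K i)[X][X],
    Q.map (mapRingHom (um K U)) = P ∧ Q.natDegree = P.natDegree ∧ Q.Monic :=
  lifts_and_natDegree_eq_and_monic (mem_lifts2 (um K U) P (fun _ _ => um_surj K U _)) hP

lemma lift1 (P : (UW K U)[X]) : ∃ Q : (∀ i, K i)[X], Q.map (um K U) = P := by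
  have : P ∈ lifts (um K U) := by
    rw [lifts_iff_coeff_lifts]; exact fun n => um_surj K U _
  rw [mem_lifts] at this
  exact this

lemma zero_transfer1 (P : (∀ i, K i)[X]) :
    P.map (um K U) = 0 ↔ ∀ᶠ i in (U : Filter ℕ), P.map (pr K i) = 0 := by
  constructor
  · intro h
    have h1 : ∀ j, ∀ᶠ i in (U : Filter ℕ), (P.coeff j) i = 0 := by
      intro j
      rw [← um_eq_zero, ← coeff_map, h, coeff_zero]
    have h2 : ∀ᶠ i in (U : Filter ℕ), ∀ j ∈ Finset.range (P.natDegree + 1), (P.coeff j) i = 0 := by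
      rw [Finset.eventually_all]
      exact fun j _ => h1 j
    filter_upwards [h2] with i hi
    ext j
    rw [coeff_map, coeff_zero]
    by_cases hj : j < P.natDegree + 1
    · exact hi j (Finset.mem_range.2 hj)
    · rw [coeff_eq_zero_of_natDegree_lt (by omega), map_zero]
  · intro h
    ext j
    rw [coeff_map, coeff_zero, um_eq_zero]
    filter_upwards [h] with i hi
    have := congrArg (fun F => coeff F j) hi
    simpa using this

lemma zero_transfer2 (P : (∀ i, K i)[X][X]) : P.map (mapRingHom (um K U)) = 0 ↔
    ∀ᶠ i in (U : Filter ℕ), P.map (mapRingHom (pr K i)) = 0 := by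
  constructor
  · intro h
    have h1 : ∀ j, ∀ᶠ i in (U : Filter ℕ), (P.coeff j).map (pr K i) = 0 := by
      intro j
      rw [← zero_transfer1]
      have := congrArg (fun F => coeff F j) h
      simpa using this
    have h2 : ∀ᶠ i in (U : Filter ℕ), ∀ j ∈ Finset.range (P.natDegree + 1), (P.coeff j).map (pr K i) = 0 := by
      rw [Finset.eventually_all]
      exact fun j _ => h1 j
    filter_upwards [h2] with i hi
    ext1 j
    rw [coeff_map, coeff_zero]
    by_cases hj : j < P.natDegree + 1
    · exact hi j (Finset.mem_range.2 hj)
    · rw [coeff_eq_zero_of_natDegree_lt (by omega), map_zero]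
  · intro h
    ext1 j
    rw [coeff_map, coeff_zero]
    have := (zero_transfer1 K U (P.coeff j)).2 (by
      filter_upwards [h] with i hi
      have := congrArg (fun F => coeff F j) hi
      simpa using this)
    simpa using this

lemma eq_transfer2 (P Q : (∀ i, K i)[X][X]) :
    P.map (mapRingHom (um K U)) = Q.map (mapRingHom (um K U)) ↔
    ∀ᶠ i in (U : Filter ℕ), P.map (mapRingHom (pr K i)) = Q.map (mapRingHom (pr K i)) := by
  have := zero_transfer2 K U (P - Q)
  simpa [sub_eq_zero] using this

lemma ev2_um (P : (∀ i, K i)[X][X]) (x y : ∀ i, K i) :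
    ev2 (RingHom.id _) (um K U x) (um K U y) (P.map (mapRingHom (um K U))) =
      um K U (fun i => ev2 (RingHom.id _) (x i) (y i) (P.map (mapRingHom (pr K i)))) := by
  have h1 : (fun i => ev2 (RingHom.id _) (x i) (y i) (P.map (mapRingHom (pr K i)))) =
      ev2 (RingHom.id _) x y P := by
    funext i
    rw [ev2_map]
    exact (map_ev2 (RingHom.id _) (pr K i) x y P).symm
  rw [h1, ev2_map]
  exact (map_ev2 (RingHom.id _) (um K U) x y P).symm

lemma eval_um (P : (∀ i, K i)[X]) (x : ∀ i, K i) :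
    (P.map (um K U)).eval (um K U x) = um K U (fun i => (P.map (pr K i)).eval (x i)) := by
  have h1 : (fun i => (P.map (pr K i)).eval (x i)) = P.eval x := by
    funext i
    rw [eval_map]
    exact eval₂_hom (pr K i) x
  rw [h1, eval_map, eval₂_hom]

lemma xd_bound (P : (∀ i, K i)[X][X]) : ∃ c, ∀ c', c ≤ c' →
    ∀ i, XD c' (P.map (mapRingHom (pr K i))) ∧ (P.map (mapRingHom (pr K i))).natDegree ≤ c' := by
  refine ⟨(∑ j ∈ Finset.range (P.natDegree + 1), (P.coeff j).natDegree) + P.natDegree, ?_⟩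
  intro c' hc' i
  refine ⟨fun j => ?_, natDegree_map_le.trans (by omega)⟩
  rw [coeff_map, coe_mapRingHom]
  refine natDegree_map_le.trans ?_
  by_cases hj : j < P.natDegree + 1
  · have := Finset.single_le_sum (f := fun j => (P.coeff j).natDegree) (fun _ _ => Nat.zero_le _)
      (Finset.mem_range.2 hj)
    omega
  · rw [coeff_eq_zero_of_natDegree_lt (by omega)]; simp

/-- Assemble a sequence of bivariate polynomials. -/
noncomputable def asm2 (n c : ℕ) (a : ∀ i, (K i)[X][X]) : (∀ i, K i)[X][X] :=
  ∑ j ∈ Finset.range (n + 1), C (∑ l ∈ Finset.range (c + 1), C (fun i => ((a i).coeff j).coeff l) * X ^ l) * X ^ j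

lemma asm2_pr (n c : ℕ) (a : ∀ i, (K i)[X][X]) (i : ℕ) (h1 : (a i).natDegree ≤ n) (h2 : XD c (a i)) :
    (asm2 K n c a).map (mapRingHom (pr K i)) = a i := by
  have e1 := as_sum_range_C_mul_X_pow' (p := a i) (n := n + 1) (by omega)
  conv_rhs => rw [e1]
  rw [asm2, Polynomial.map_sum]
  refine Finset.sum_congr rfl fun j _ => ?_
  have e2 := as_sum_range_C_mul_X_pow' (p := (a i).coeff j) (n := c + 1) (by have := h2 j; omega)
  rw [Polynomial.map_mul, map_C, Polynomial.map_pow, map_X]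
  conv_rhs => rw [e2]
  rw [map_sum]
  simp

lemma coeff_swap {k : Type*} [Field k] (P : k[X][X]) (a b : ℕ) :
    ((Bivariate.swap P).coeff a).coeff b = (P.coeff b).coeff a := by
  induction P using Polynomial.induction_on' with
  | add p q hp hq => simp [hp, hq]
  | monomial n f =>
    induction f using Polynomial.induction_on' with
    | add p q hp hq => 
      rw [map_add, map_add, coeff_add, coeff_add, coeff_add, coeff_add, hp, hq]
    | monomial m r =>
      rw [Bivariate.swap_monomial_monomial]
      simp only [coeff_monomial]
      by_cases h1 : m = a <;> by_cases h2 : n = b <;> simp [h1, h2, coeff_monomial]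

lemma XD_iff_swap {k : Type*} [Field k] (P : k[X][X]) (s : ℕ) :
    XD s P ↔ (Bivariate.swap P).natDegree ≤ s := by
  rw [natDegree_le_iff_coeff_eq_zero]
  constructor
  · intro h N hN
    ext b
    rw [coeff_swap, coeff_zero]
    exact coeff_eq_zero_of_natDegree_lt (lt_of_le_of_lt (h b) hN)
  · intro h j
    rw [natDegree_le_iff_coeff_eq_zero]
    intro N hN
    rw [← coeff_swap, h N hN, coeff_zero]

lemma XD_of_mul {k : Type*} [Field k] {P Q : k[X][X]} {s : ℕ} (h0 : P * Q ≠ 0) (h : XD s (P * Q)) :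
    XD s P ∧ XD s Q := by
  have hP : Bivariate.swap P ≠ 0 := by
    rw [Ne, EmbeddingLike.map_eq_zero_iff]; exact left_ne_zero_of_mul h0
  have hQ : Bivariate.swap Q ≠ 0 := by
    rw [Ne, EmbeddingLike.map_eq_zero_iff]; exact right_ne_zero_of_mul h0
  rw [XD_iff_swap, map_mul, natDegree_mul hP hQ] at h
  rw [XD_iff_swap, XD_iff_swap]
  omega

lemma irred_transfer (P : (∀ i, K i)[X][X]) (hP : P.Monic)
    (hirr : Irreducible (P.map (mapRingHom (um K U)))) :
    ∀ᶠ i in (U : Filter ℕ), Irreducible (P.map (mapRingHom (pr K i))) := by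
  classical
  by_contra hcon
  rw [← Ultrafilter.eventually_not] at hcon
  have hn := (hP.map (mapRingHom (um K U))).irreducible_iff_natDegree.1 hirr
  set n := P.natDegree with hnd
  obtain ⟨c, hc⟩ := xd_bound K P
  have hne1 : ∀ i, P.map (mapRingHom (pr K i)) ≠ 1 := by
    intro i h
    apply hn.1
    rw [← (hP.map _).natDegree_eq_zero, hP.natDegree_map, ← hP.natDegree_map (mapRingHom (pr K i)), h,
      natDegree_one]
  have hfac : ∀ i, ∃ ab : (K i)[X][X] × (K i)[X][X], ¬ Irreducible (P.map (mapRingHom (pr K i))) →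
      ab.1.Monic ∧ ab.2.Monic ∧ ab.1 * ab.2 = P.map (mapRingHom (pr K i)) ∧ ab.1.natDegree ≠ 0 ∧
      ab.2.natDegree ≠ 0 := by
    intro i
    by_cases h : Irreducible (P.map (mapRingHom (pr K i)))
    · exact ⟨(0, 0), fun h' => absurd h h'⟩
    · have h1 := h
      rw [(hP.map (mapRingHom (pr K i))).irreducible_iff_natDegree] at h
      push Not at h
      obtain ⟨a, b, ha, hb, hab, h2, h3⟩ := h (hne1 i)
      exact ⟨(a, b), fun _ => ⟨ha, hb, hab, h2, h3⟩⟩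
  choose ab hab using hfac
  let a := fun i => (ab i).1
  let b := fun i => (ab i).2
  have hdegs : ∀ᶠ i in (U : Filter ℕ), (a i).natDegree + (b i).natDegree = n := by
    filter_upwards [hcon] with i hi
    obtain ⟨h1, h2, h3, -, -⟩ := hab i hi
    rw [← h1.natDegree_mul h2, h3, hP.natDegree_map]
  have hex : ∀ f : ℕ → ℕ, (∀ᶠ i in (U : Filter ℕ), f i ≤ n) → ∃ d, ∀ᶠ i in (U : Filter ℕ), f i = d := by
    intro f hf
    have : ∀ᶠ i in (U : Filter ℕ), ∃ d ∈ Finset.range (n + 1), f i = d := by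
      filter_upwards [hf] with i hi
      exact ⟨f i, Finset.mem_range.2 (by omega), rfl⟩
    have h2 := (Ultrafilter.eventually_exists_mem_iff (Finset.finite_toSet (Finset.range (n + 1)))).1 this
    obtain ⟨d, -, hd⟩ := h2
    exact ⟨d, hd⟩
  obtain ⟨da, hda⟩ := hex (fun i => (a i).natDegree) (by
    filter_upwards [hdegs] with i hi; omega)
  obtain ⟨db, hdb⟩ := hex (fun i => (b i).natDegree) (by
    filter_upwards [hdegs] with i hi; omega)
  have hasm : ∀ᶠ i in (U : Filter ℕ), (asm2 K n c a).map (mapRingHom (pr K i)) = a i ∧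
      (asm2 K n c b).map (mapRingHom (pr K i)) = b i := by
    filter_upwards [hcon, hdegs] with i hi hd
    obtain ⟨h1, h2, h3, -, -⟩ := hab i hi
    have hx := (hc c le_rfl i).1
    rw [← h3] at hx
    have := XD_of_mul (h1.mul h2).ne_zero hx
    exact ⟨asm2_pr K n c a i (by omega) this.1, asm2_pr K n c b i (by omega) this.2⟩
  have hmul : (asm2 K n c a * asm2 K n c b).map (mapRingHom (um K U)) = P.map (mapRingHom (um K U)) := by
    rw [eq_transfer2]
    filter_upwards [hasm, hcon] with i hi h2
    rw [Polynomial.map_mul, hi.1, hi.2, (hab i h2).2.2.1]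
  have hmon : ∀ (a : ∀ i, (K i)[X][X]) (d : ℕ), (∀ᶠ i in (U : Filter ℕ), (a i).Monic ∧ (a i).natDegree = d ∧
      (asm2 K n c a).map (mapRingHom (pr K i)) = a i) →
      ((asm2 K n c a).map (mapRingHom (um K U))).Monic ∧
      ((asm2 K n c a).map (mapRingHom (um K U))).natDegree = d := by
    intro a d h
    have hz : (asm2 K n c a - (X ^ d + ∑ j ∈ Finset.range d, C ((asm2 K n c a).coeff j) * X ^ j)).map
        (mapRingHom (um K U)) = 0 := by
      rw [zero_transfer2]
      filter_upwards [h] with i hi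
      rw [Polynomial.map_sub, sub_eq_zero, Polynomial.map_add, Polynomial.map_sum]
      simp only [Polynomial.map_mul, map_C, Polynomial.map_pow, map_X]
      have : ∀ j, (mapRingHom (pr K i)) ((asm2 K n c a).coeff j) = (a i).coeff j := by
        intro j
        rw [← coeff_map, hi.2.2]
      simp only [this]
      rw [hi.2.2, ← hi.2.1]
      exact hi.1.as_sum
    rw [Polynomial.map_sub, sub_eq_zero, Polynomial.map_add, Polynomial.map_sum] at hz
    simp only [Polynomial.map_mul, map_C, Polynomial.map_pow, map_X] at hz
    rw [hz]
    set s := ∑ j ∈ Finset.range d, C ((mapRingHom (um K U)) ((asm2 K n c a).coeff j)) * X ^ j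
    have hs : s.degree < (d : ℕ) := by
      rw [degree_lt_iff_coeff_zero]
      intro m hm
      rw [finsetSum_coeff]
      refine Finset.sum_eq_zero fun j hj => ?_
      rw [Finset.mem_range] at hj
      rw [coeff_C_mul, coeff_X_pow, if_neg (by omega), mul_zero]
    refine ⟨monic_X_pow_add hs, ?_⟩
    apply natDegree_eq_of_degree_eq_some
    rw [degree_add_eq_left_of_degree_lt, degree_X_pow]
    rwa [degree_X_pow]
  obtain ⟨ma, na⟩ := hmon a da (by
    filter_upwards [hcon, hda, hasm] with i h1 h2 h3
    exact ⟨(hab i h1).1, h2, h3.1⟩)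
  obtain ⟨mb, nb⟩ := hmon b db (by
    filter_upwards [hcon, hdb, hasm] with i h1 h2 h3
    exact ⟨(hab i h1).2.1, h2, h3.2⟩)
  rw [Polynomial.map_mul] at hmul
  have := hn.2 _ _ ma mb hmul
  rw [na, nb] at this
  obtain ⟨i, h1, h2, h3⟩ := (hcon.and (hda.and hdb)).exists
  have := hab i h1
  simp only [a, b] at h2 h3
  omega

end ultra
end Felg

end part7

section part8
open Polynomial Filter

namespace Felg

section ultra
variable (K : ℕ → Type) [∀ i, Field (K i)] (U : Ultrafilter ℕ)

theorem ultra_point [∀ i, IsAlgClosed (K i)] (p e q : ℕ → ℕ) [∀ i, Fact (p i).Prime]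
    [∀ i, CharP (K i) (p i)] (hq : ∀ i, q i = p i ^ e i) (he : ∀ i, e i ≠ 0)
    (hlim : ∀ N, ∀ᶠ i in (U : Filter ℕ), N ≤ q i) (r s : ∀ i, K i →+* K i)
    (hr : ∀ i x, r i x = x ^ (q i ^ 2)) (hs : ∀ i x, s i x = x ^ q i)
    {g : (UW K U)[X][X]} (hg : g.Monic) (hirr : Irreducible g)
    (α β : (UW K U)[X][X]) (D : (UW K U)[X]) (hD : D ≠ 0) (hab : α * g + β * derivative g = C D)
    (g₀ f : (UW K U)[X][X]) (hg₀ : g₀.Monic) (hirr₀ : Irreducible g₀) (n₀ : ℕ) (hn₀ : g₀.natDegree = n₀)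
    (hgf : g ∣ ∑ j ∈ Finset.range (n₀ + 1), C (g₀.coeff j) * f ^ j * C D ^ (n₀ - j))
    (h : Fin n₀ → (UW K U)[X][X])
    (hcov : ∀ x y, urho K U r x = x → ev2 (RingHom.id _) x y g = 0 → D.eval x ≠ 0 →
      ∃ t, urho K U r (ev2 (RingHom.id _) x y f / D.eval x) = ev2 (RingHom.id _) x y (h t) / D.eval x)
    (t : Fin n₀) :
    ∃ x y, urho K U r x = x ∧ urho K U s x ≠ x ∧ ev2 (RingHom.id _) x y g = 0 ∧ D.eval x ≠ 0 ∧
      urho K U r (ev2 (RingHom.id _) x y f / D.eval x) = ev2 (RingHom.id _) x y (h t) / D.eval x := by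
  classical
  obtain ⟨g, rfl, hgd, hgm⟩ := lift2m K U g hg
  obtain ⟨g₀, rfl, hgd₀, hgm₀⟩ := lift2m K U g₀ hg₀
  obtain ⟨α, rfl⟩ := lift2 K U α
  obtain ⟨β, rfl⟩ := lift2 K U β
  obtain ⟨f, rfl⟩ := lift2 K U f
  obtain ⟨D, rfl⟩ := lift1 K U D
  obtain ⟨w, hw⟩ := hgf
  obtain ⟨w, rfl⟩ := lift2 K U w
  choose h' hh' using fun t => lift2 K U (h t)
  obtain rfl : (fun t => (h' t).map (mapRingHom (um K U))) = h := funext hh'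
  have h01 : 1 ≤ n₀ := t.pos
  -- bounds
  obtain ⟨c1, hc1⟩ := xd_bound K g
  obtain ⟨c2, hc2⟩ := xd_bound K f
  choose c3 hc3 using fun t => xd_bound K (h' t)
  set c := c1 + c2 + D.natDegree + ∑ t, c3 t with hc
  have hc3' : ∀ t, c3 t ≤ c := by
    intro t
    have := Finset.single_le_sum (f := c3) (fun _ _ => Nat.zero_le _) (Finset.mem_univ t)
    omega
  obtain ⟨q0, hq0⟩ := finite_point.{0} g.natDegree n₀ c h01
  -- transfers
  have T1 : ∀ᶠ i in (U : Filter ℕ), D.map (pr K i) ≠ 0 := by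
    rw [Ultrafilter.eventually_not, ← zero_transfer1]; exact hD
  have T2 : ∀ᶠ i in (U : Filter ℕ), α.map (mapRingHom (pr K i)) * g.map (mapRingHom (pr K i)) +
      β.map (mapRingHom (pr K i)) * derivative (g.map (mapRingHom (pr K i))) = C (D.map (pr K i)) := by
    have h1 : (α * g + β * derivative g).map (mapRingHom (um K U)) = (C D).map (mapRingHom (um K U)) := by
      rw [Polynomial.map_add, Polynomial.map_mul, Polynomial.map_mul, ← derivative_map, map_C, hab]
      rfl
    rw [eq_transfer2] at h1
    filter_upwards [h1] with i hi
    rw [Polynomial.map_add, Polynomial.map_mul, Polynomial.map_mul, ← derivative_map, map_C] at hi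
    exact hi
  have T3 : ∀ᶠ i in (U : Filter ℕ), g.map (mapRingHom (pr K i)) ∣ ∑ j ∈ Finset.range (n₀ + 1),
      C ((g₀.map (mapRingHom (pr K i))).coeff j) * (f.map (mapRingHom (pr K i))) ^ j *
        C (D.map (pr K i)) ^ (n₀ - j) := by
    have h1 : (∑ j ∈ Finset.range (n₀ + 1), C (g₀.coeff j) * f ^ j * C D ^ (n₀ - j)).map (mapRingHom (um K U))
        = (g * w).map (mapRingHom (um K U)) := by
      rw [Polynomial.map_mul, ← hw, Polynomial.map_sum]
      simp
    rw [eq_transfer2] at h1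
    filter_upwards [h1] with i hi
    rw [Polynomial.map_mul, Polynomial.map_sum] at hi
    refine ⟨w.map (mapRingHom (pr K i)), ?_⟩
    rw [← hi]
    simp
  have T4 := irred_transfer K U g hgm hirr
  have T5 := irred_transfer K U g₀ hgm₀ hirr₀
  let Cov : ∀ i, K i → K i → Fin n₀ → Prop := fun i x y t =>
    (ev2 (RingHom.id _) x y (f.map (mapRingHom (pr K i))) / (D.map (pr K i)).eval x) ^ (q i ^ 2) =
      ev2 (RingHom.id _) x y ((h' t).map (mapRingHom (pr K i))) / (D.map (pr K i)).eval x
  have hdiv : ∀ a b : ∀ i, K i, um K U a / um K U b = um K U (fun i => a i / b i) := by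
    intro a b
    by_cases hb : um K U b = 0
    · have hb' := hb
      rw [um_eq_zero] at hb'
      rw [hb, div_zero, eq_comm, um_eq_zero]
      filter_upwards [hb'] with i hi
      rw [hi, div_zero]
    · rw [div_eq_iff hb, ← map_mul, um_eq]
      rw [um_eq_zero, ← Ultrafilter.eventually_not] at hb
      filter_upwards [hb] with i hi
      rw [Pi.mul_apply, div_mul_cancel₀ _ hi]
  have hCov : ∀ (x y : ∀ i, K i) t, urho K U r (ev2 (RingHom.id _) (um K U x) (um K U y)
      (f.map (mapRingHom (um K U))) / (D.map (um K U)).eval (um K U x)) =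
      ev2 (RingHom.id _) (um K U x) (um K U y) ((h' t).map (mapRingHom (um K U))) / (D.map (um K U)).eval (um K U x)
      ↔ ∀ᶠ i in (U : Filter ℕ), Cov i (x i) (y i) t := by
    intro x y t
    rw [ev2_um, ev2_um, eval_um, hdiv, hdiv, urho_um, um_eq]
    simp only [hr, Cov]
  have T6 : ∀ᶠ i in (U : Filter ℕ), ∀ x y : K i, x ^ (q i ^ 2) = x →
      ev2 (RingHom.id _) x y (g.map (mapRingHom (pr K i))) = 0 → (D.map (pr K i)).eval x ≠ 0 →
      ∃ t, Cov i x y t := by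
    by_contra hcon
    rw [← Ultrafilter.eventually_not] at hcon
    have : ∀ i, ∃ xy : K i × K i, (¬ ∀ x y : K i, x ^ (q i ^ 2) = x →
      ev2 (RingHom.id _) x y (g.map (mapRingHom (pr K i))) = 0 → (D.map (pr K i)).eval x ≠ 0 →
      ∃ t, Cov i x y t) → xy.1 ^ (q i ^ 2) = xy.1 ∧
      ev2 (RingHom.id _) xy.1 xy.2 (g.map (mapRingHom (pr K i))) = 0 ∧ (D.map (pr K i)).eval xy.1 ≠ 0 ∧
      ∀ t, ¬ Cov i xy.1 xy.2 t := by
      intro i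
      by_cases hh : ∀ x y : K i, x ^ (q i ^ 2) = x →
        ev2 (RingHom.id _) x y (g.map (mapRingHom (pr K i))) = 0 → (D.map (pr K i)).eval x ≠ 0 →
        ∃ t, Cov i x y t
      · exact ⟨(0, 0), fun h => absurd hh h⟩
      · have hh' := hh
        push Not at hh
        obtain ⟨x, y, h1, h2, h3, h4⟩ := hh
        exact ⟨(x, y), fun _ => ⟨h1, h2, h3, h4⟩⟩
    choose xy hxy using this
    obtain ⟨t, ht⟩ := hcov (um K U fun i => (xy i).1) (um K U fun i => (xy i).2) (by
        rw [urho_um, um_eq]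
        filter_upwards [hcon] with i hi
        rw [hr]; exact (hxy i hi).1) (by
        rw [ev2_um, um_eq_zero]
        filter_upwards [hcon] with i hi
        exact (hxy i hi).2.1) (by
        rw [eval_um, Ne, um_eq_zero, ← Ultrafilter.eventually_not]
        filter_upwards [hcon] with i hi
        exact (hxy i hi).2.2.1)
    rw [hCov] at ht
    obtain ⟨i, h1, h2⟩ := (ht.and hcon).exists
    exact (hxy i h2).2.2.2 t h1
  have T7 : ∀ᶠ i in (U : Filter ℕ), ∃ x y : K i, x ^ (q i ^ 2) = x ∧ x ^ q i ≠ x ∧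
      ev2 (RingHom.id _) x y (g.map (mapRingHom (pr K i))) = 0 ∧ (D.map (pr K i)).eval x ≠ 0 ∧ Cov i x y t := by
    filter_upwards [T1, T2, T3, T4, T5, T6, hlim q0] with i t1 t2 t3 t4 t5 t6 t7
    exact hq0 (p i) (hgm.map _) t4 _ _ _ t1 t2 (hc1 c (by omega) i).1 (natDegree_map_le.trans (by omega))
      (hgm.natDegree_map _) _ _ (hgm₀.map _) t5 ((hgm₀.natDegree_map _).trans (hgd₀.trans hn₀))
      (hc2 c (by omega) i).1 (hc2 c (by omega) i).2 t3 (fun t => (h' t).map (mapRingHom (pr K i)))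
      (fun t => (hc3 t c (hc3' t) i).1) (fun t => (hc3 t c (hc3' t) i).2) (e i) (q i) (hq i) (he i) t7 t6 t
  have : ∀ i, ∃ xy : K i × K i, (∃ x y : K i, x ^ (q i ^ 2) = x ∧ x ^ q i ≠ x ∧
      ev2 (RingHom.id _) x y (g.map (mapRingHom (pr K i))) = 0 ∧ (D.map (pr K i)).eval x ≠ 0 ∧ Cov i x y t) →
      (xy.1 ^ (q i ^ 2) = xy.1 ∧ xy.1 ^ q i ≠ xy.1 ∧
      ev2 (RingHom.id _) xy.1 xy.2 (g.map (mapRingHom (pr K i))) = 0 ∧ (D.map (pr K i)).eval xy.1 ≠ 0 ∧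
        Cov i xy.1 xy.2 t) := by
    intro i
    by_cases hh : ∃ x y : K i, x ^ (q i ^ 2) = x ∧ x ^ q i ≠ x ∧
      ev2 (RingHom.id _) x y (g.map (mapRingHom (pr K i))) = 0 ∧ (D.map (pr K i)).eval x ≠ 0 ∧ Cov i x y t
    · obtain ⟨x, y, h⟩ := hh
      exact ⟨(x, y), fun _ => h⟩
    · exact ⟨(0, 0), fun h => absurd h hh⟩
  choose xy hxy using this
  refine ⟨um K U fun i => (xy i).1, um K U fun i => (xy i).2, ?_, ?_, ?_, ?_, ?_⟩
  · rw [urho_um, um_eq]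
    filter_upwards [T7] with i hi
    rw [hr]; exact (hxy i hi).1
  · rw [urho_um, Ne, um_eq, ← Ultrafilter.eventually_not]
    filter_upwards [T7] with i hi
    rw [hs]; exact (hxy i hi).2.1
  · rw [ev2_um, um_eq_zero]
    filter_upwards [T7] with i hi
    exact (hxy i hi).2.2.1
  · rw [eval_um, Ne, um_eq_zero, ← Ultrafilter.eventually_not]
    filter_upwards [T7] with i hi
    exact (hxy i hi).2.2.2.1
  · rw [hCov]
    filter_upwards [T7] with i hi
    exact (hxy i hi).2.2.2.2

lemma saturation_nat {X : ℕ → Type*} [∀ i, Nonempty (X i)] (hU : (U : Filter ℕ) ≤ cofinite)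
    (Cn : ℕ → ∀ i, X i → Prop) (h : ∀ N, ∀ᶠ i in (U : Filter ℕ), ∃ x, ∀ n ≤ N, Cn n i x) :
    ∃ x : ∀ i, X i, ∀ n, ∀ᶠ i in (U : Filter ℕ), Cn n i (x i) := by
  classical
  have h1 : ∀ i, ∃ x : X i, ∀ N ≤ i, (∃ y, ∀ n ≤ N, Cn n i y) → ∀ n ≤ N, Cn n i x := by
    intro i
    by_cases hex : ∃ N, N ≤ i ∧ ∃ y, ∀ n ≤ N, Cn n i y
    · obtain ⟨N0, hN0, hh⟩ := hex
      have hsp := Nat.findGreatest_spec (P := fun N => ∃ y, ∀ n ≤ N, Cn n i y) hN0 hh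
      obtain ⟨y, hy⟩ := hsp
      refine ⟨y, fun N hN hN' n hn => hy n (hn.trans ?_)⟩
      exact Nat.le_findGreatest hN hN'
    · refine ⟨Classical.arbitrary _, fun N hN hN' => absurd ⟨N, hN, hN'⟩ hex⟩
  choose x hx using h1
  refine ⟨x, fun n => ?_⟩
  have hge : ∀ᶠ i in (U : Filter ℕ), n ≤ i := by
    apply hU
    have : {i | n ≤ i}ᶜ = Set.Iio n := by ext; simp
    change {i | n ≤ i}ᶜ.Finite
    rw [this]; exact Set.finite_Iio n
  filter_upwards [h n, hge] with i h2 h3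
  exact hx i n h3 h2 n le_rfl

lemma saturation {X : ℕ → Type*} [∀ i, Nonempty (X i)] (hU : (U : Filter ℕ) ≤ cofinite)
    {ι : Type*} [Countable ι]
    (Cn : ι → ∀ i, X i → Prop) (h : ∀ T : Finset ι, ∀ᶠ i in (U : Filter ℕ), ∃ x, ∀ n ∈ T, Cn n i x) :
    ∃ x : ∀ i, X i, ∀ n, ∀ᶠ i in (U : Filter ℕ), Cn n i (x i) := by
  classical
  rcases isEmpty_or_nonempty ι with hι | hι
  · exact ⟨fun i => Classical.arbitrary _, fun n => (hι.false n).elim⟩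
  obtain ⟨fn, hfn⟩ := exists_surjective_nat ι
  obtain ⟨x, hx⟩ := saturation_nat U hU (fun n => Cn (fn n)) (by
    intro N
    filter_upwards [h ((Finset.range (N + 1)).image fn)] with i hi
    obtain ⟨x, hx⟩ := hi
    exact ⟨x, fun n hn => hx _ (Finset.mem_image_of_mem _ (Finset.mem_range.2 (by omega)))⟩)
  refine ⟨x, fun n => ?_⟩
  obtain ⟨m, rfl⟩ := hfn n
  exact hx m

end ultra
end Felg

end part8

section part9
open Polynomial Filter

namespace Felg

/-- Separability over `A(c)` expressed with bivariate polynomials. -/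
def Sep {A W : Type*} [Field A] [Field W] (i : A →+* W) (c s : W) : Prop :=
  ∃ (G α β : A[X][X]) (D : A[X]), D ≠ 0 ∧ ev2 i c s G = 0 ∧ α * G + β * derivative G = C D

lemma clear_den {A : Type*} [Field A] (P : (FractionRing A[X])[X]) :
    ∃ (Q : A[X][X]) (d : A[X]), d ≠ 0 ∧
      Q.map (algebraMap A[X] (FractionRing A[X])) = C (algebraMap A[X] (FractionRing A[X]) d) * P := by
  obtain ⟨b, hb, h⟩ := IsLocalization.integerNormalization_spec (nonZeroDivisors A[X]) P
  refine ⟨_, b, nonZeroDivisors.ne_zero hb, h.trans ?_⟩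
  rw [← smul_eq_C_mul, algebraMap_smul]

lemma common_den {A W : Type*} [Field A] [Field W] (i : A →+* W) (c z : W) (S : Finset W)
    (h : ∀ s ∈ S, ∃ (P : A[X][X]) (d : A[X]), d ≠ 0 ∧ s * d.eval₂ i c = ev2 i c z P) :
    ∃ d : A[X], d ≠ 0 ∧ ∀ s ∈ S, ∃ P : A[X][X], s * d.eval₂ i c = ev2 i c z P := by
  classical
  induction S using Finset.induction_on with
  | empty => exact ⟨1, one_ne_zero, by simp⟩
  | insert s S hs ih =>
    obtain ⟨d, hd, hP⟩ := ih fun s hs => h s (Finset.mem_insert_of_mem hs)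
    obtain ⟨P, e, he, hP'⟩ := h s (Finset.mem_insert_self _ _)
    refine ⟨d * e, mul_ne_zero hd he, fun t ht => ?_⟩
    rcases Finset.mem_insert.1 ht with rfl | ht
    · refine ⟨C d * P, ?_⟩
      rw [map_mul, ← hP', ev2_C, eval₂_mul]; ring
    · obtain ⟨Q, hQ⟩ := hP t ht
      refine ⟨C e * Q, ?_⟩
      rw [map_mul, ← hQ, ev2_C, eval₂_mul]; ring

lemma prim {A W : Type*} [Field A] [Field W] (i : A →+* W) (c : W)
    (hc : ∀ f : A[X], f.eval₂ i c = 0 → f = 0) (S : Finset W) (hS : ∀ s ∈ S, Sep i c s)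
    (D' : A[X]) (hD' : D' ≠ 0) :
    ∃ (z : W) (g α β : A[X][X]) (D : A[X]), g.Monic ∧ Irreducible g ∧ ev2 i c z g = 0 ∧ D ≠ 0 ∧
      D' ∣ D ∧ α * g + β * derivative g = C D ∧
      ∀ s ∈ S, ∃ P : A[X][X], s * D.eval₂ i c = ev2 i c z P := by
  classical
  let φ : A[X] →+* W := eval₂RingHom i c
  have hφ : Function.Injective φ := (injective_iff_map_eq_zero φ).2 hc
  let K := FractionRing A[X]
  have hinj : Function.Injective (algebraMap A[X] K) := IsFractionRing.injective A[X] K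
  let ψ : K →+* W := IsFractionRing.lift hφ
  have hψ : ψ.comp (algebraMap A[X] K) = φ := by
    exact RingHom.ext fun x => IsFractionRing.lift_algebraMap hφ x
  let _ : Algebra K W := ψ.toAlgebra
  let _ : Algebra A[X] W := φ.toAlgebra
  have : IsScalarTower A[X] K W := IsScalarTower.of_algebraMap_eq' hψ.symm
  have hev : ∀ (z : W) (Q : A[X][X]), aeval z (Q.map (algebraMap A[X] K)) = ev2 i c z Q := by
    intro z Q
    rw [aeval_map_algebraMap, aeval_def]
    rfl
  have hsep : ∀ (G α β : A[X][X]) (D : A[X]), D ≠ 0 → α * G + β * derivative G = C D →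
      (G.map (algebraMap A[X] K)).Separable := by
    intro G α β D hD hab
    have hDK : algebraMap A[X] K D ≠ 0 := by
      rwa [Ne, map_eq_zero_iff _ hinj]
    have h1 := congrArg (Polynomial.map (algebraMap A[X] K)) hab
    rw [Polynomial.map_add, Polynomial.map_mul, Polynomial.map_mul, ← derivative_map, map_C] at h1
    refine ⟨C (algebraMap A[X] K D)⁻¹ * α.map (algebraMap A[X] K),
      C (algebraMap A[X] K D)⁻¹ * β.map (algebraMap A[X] K), ?_⟩
    rw [mul_assoc, mul_assoc, ← mul_add, h1, ← C_mul, inv_mul_cancel₀ hDK, C_1]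
  have hSK : ∀ s ∈ (S : Set W), IsSeparable K s := by
    intro s hs
    obtain ⟨G, α, β, D, hD, hG, hab⟩ := hS s hs
    refine (hsep G α β D hD hab).of_dvd (minpoly.dvd K s ?_)
    rw [hev, hG]
  let L := IntermediateField.adjoin K (S : Set W)
  have hLs : Algebra.IsSeparable K L :=
    (IntermediateField.isSeparable_adjoin_iff_isSeparable K W).2 hSK
  have hLf : FiniteDimensional K L :=
    IntermediateField.finiteDimensional_adjoin fun s hs => (hSK s hs).isIntegral
  obtain ⟨z0, hz0⟩ := Field.exists_primitive_element K L
  have hz0i : IsAlgebraic K z0 := Algebra.IsAlgebraic.isAlgebraic z0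
  obtain ⟨⟨b, hb⟩, hbz⟩ := IsIntegral.exists_multiple_integral_of_isLocalization
    (nonZeroDivisors A[X]) (z0 : W) (Algebra.IsIntegral.isIntegral (R := K) z0 |>.map L.val)
  have hb0 : b ≠ 0 := nonZeroDivisors.ne_zero hb
  have hbK : algebraMap A[X] K b ≠ 0 := by rwa [Ne, map_eq_zero_iff _ hinj]
  set z : W := b • (z0 : W) with hz
  have hz' : z = φ b * z0 := by rw [hz, Algebra.smul_def]; rfl
  have hzi : IsIntegral A[X] z := hbz
  set g := minpoly A[X] z with hg
  have hgm : g.Monic := minpoly.monic hzi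
  have hgi : Irreducible g := minpoly.irreducible hzi
  have hgz : ev2 i c z g = 0 := by
    rw [← hev, aeval_map_algebraMap]; exact minpoly.aeval _ _
  have hgs : (g.map (algebraMap A[X] K)).Separable := by
    have h1 : minpoly K z = g.map (algebraMap A[X] K) :=
      minpoly.isIntegrallyClosed_eq_field_fractions' K hzi
    rw [← h1]
    have h3 : z ∈ L := by
      rw [hz, ← algebraMap_smul K b (z0 : W)]
      exact L.smul_mem z0.2
    exact mem_separableClosure_iff.1 (le_separableClosure K W L h3)
  obtain ⟨α, β, hab⟩ := hgs
  obtain ⟨α', d1, hd1, hα⟩ := clear_den α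
  obtain ⟨β', d2, hd2, hβ⟩ := clear_den β
  have hrep : ∀ s ∈ S, ∃ (P : A[X][X]) (d : A[X]), d ≠ 0 ∧ s * d.eval₂ i c = ev2 i c z P := by
    intro s hs
    have hsL : s ∈ L := IntermediateField.subset_adjoin K _ hs
    have h1 : (⟨s, hsL⟩ : L) ∈ IntermediateField.adjoin K {z0} := hz0 ▸ IntermediateField.mem_top
    rw [← IntermediateField.mem_toSubalgebra,
      IntermediateField.adjoin_simple_toSubalgebra_of_isAlgebraic hz0i,
      Algebra.adjoin_singleton_eq_range_aeval] at h1
    obtain ⟨P, hP⟩ := h1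
    obtain ⟨Q, d, hd, hQ⟩ := clear_den (P.comp (C (algebraMap A[X] K b)⁻¹ * X))
    refine ⟨Q, d, hd, ?_⟩
    rw [← hev, hQ]
    have hP' : aeval (z0 : W) P = s := by
      have := congrArg (algebraMap L W) hP
      rw [AlgHom.toRingHom_eq_coe, RingHom.coe_coe, ← aeval_algebraMap_apply] at this
      exact this
    have hbφ : φ b ≠ 0 := by rwa [Ne, map_eq_zero_iff _ hφ]
    have hψb : ∀ b, algebraMap K W (algebraMap A[X] K b) = φ b := fun b =>
      RingHom.congr_fun hψ b
    rw [map_mul, aeval_C, hψb, aeval_comp, map_mul, aeval_C, aeval_X, map_inv₀, hψb, hz',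
      inv_mul_cancel_left₀ hbφ, hP', mul_comm]
    rfl
  obtain ⟨d, hd, hP⟩ := common_den i c z S hrep
  refine ⟨z, g, C (d2 * d * D') * α', C (d1 * d * D') * β', d1 * d2 * d * D', hgm, hgi, hgz,
    mul_ne_zero (mul_ne_zero (mul_ne_zero hd1 hd2) hd) hD', dvd_mul_left _ _, ?_, ?_⟩
  · apply map_injective _ hinj
    rw [Polynomial.map_add, Polynomial.map_mul, Polynomial.map_mul, Polynomial.map_mul,
      Polynomial.map_mul, ← derivative_map, map_C, map_C, map_C, hα, hβ]
    simp only [map_mul]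
    linear_combination (C (algebraMap A[X] K d1) * C (algebraMap A[X] K d2) * C (algebraMap A[X] K d)
      * C (algebraMap A[X] K D')) * hab
  · intro s hs
    obtain ⟨P, hP⟩ := hP s hs
    refine ⟨C (d1 * d2 * D') * P, ?_⟩
    rw [map_mul, ← hP, ev2_C, eval₂_mul, eval₂_mul, eval₂_mul, eval₂_mul, eval₂_mul]; ring

end Felg

end part9

section part10
open Polynomial Filter

namespace Felg

/-- The homogenised evaluation `D ^ n * P(X, f / D)`. -/
noncomputable def hom {A : Type*} [Field A] (P f : A[X][X]) (D : A[X]) (n : ℕ) : A[X][X] :=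
  ∑ j ∈ Finset.range (n + 1), C (P.coeff j) * f ^ j * C D ^ (n - j)

lemma ev2_hom {A W : Type*} [Field A] [Field W] (i : A →+* W) (x y : W) (P f : A[X][X]) (D : A[X])
    (n : ℕ) (hn : P.natDegree ≤ n) (hD : D.eval₂ i x ≠ 0) :
    ev2 i x y (hom P f D n) =
      D.eval₂ i x ^ n * ev2 i x (ev2 i x y f / D.eval₂ i x) P := by
  have h1 : ev2 i x (ev2 i x y f / D.eval₂ i x) P =
      ∑ j ∈ Finset.range (n + 1), (P.coeff j).eval₂ i x * (ev2 i x y f / D.eval₂ i x) ^ j := by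
    conv_lhs => rw [P.as_sum_range_C_mul_X_pow' (Nat.lt_succ_of_le hn)]
    simp [map_sum]
  rw [h1, hom, map_sum, Finset.mul_sum]
  refine Finset.sum_congr rfl fun j hj => ?_
  have hj' : j ≤ n := by simpa [Nat.lt_succ_iff] using hj
  rw [map_mul, map_mul, map_pow, map_pow, ev2_C, ev2_C, div_pow]
  have : D.eval₂ i x ^ n = D.eval₂ i x ^ j * D.eval₂ i x ^ (n - j) := by
    rw [← pow_add]; congr 1; omega
  rw [this]
  field_simp

lemma split_fin {W : Type*} [Field W] [IsAlgClosed W] (P : W[X]) (hP : P.Monic) (n : ℕ)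
    (hn : P.natDegree = n) : ∃ y : Fin n → W, P = ∏ t, (X - C (y t)) := by
  have hs := IsAlgClosed.splits P
  have h1 : P = (P.roots.map fun a => X - C a).prod := by
    conv_lhs => rw [hs.eq_prod_roots, hP.leadingCoeff, C_1, one_mul]
  have h2 : P.roots.card = n := by rw [← hn, hs.natDegree_eq_card_roots]
  obtain ⟨l, hl⟩ := Quot.exists_rep P.roots
  have hl' : P.roots = (l : Multiset W) := hl.symm
  have h3 : l.length = n := by rw [← h2, hl']; rfl
  subst h3
  refine ⟨fun t => l.get t, ?_⟩
  conv_lhs => rw [h1, hl']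
  rw [Multiset.map_coe, Multiset.prod_coe, ← List.prod_ofFn]
  congr 1
  exact List.ext_get (by simp) (by intros; simp)

/-- The specialisation property supplied by `ultra_point`. -/
def PointProp (W : Type) [Field W] (ρ κ : W →+* W) : Prop :=
  ∀ (g α β : W[X][X]) (D : W[X]) (g₀ f : W[X][X]) (n₀ : ℕ) (h : Fin n₀ → W[X][X]) (t : Fin n₀),
    g.Monic → Irreducible g → D ≠ 0 → α * g + β * derivative g = C D → g₀.Monic → Irreducible g₀ →
    g₀.natDegree = n₀ →
    g ∣ ∑ j ∈ Finset.range (n₀ + 1), C (g₀.coeff j) * f ^ j * C D ^ (n₀ - j) →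
    (∀ x y, ρ x = x → ev2 (RingHom.id _) x y g = 0 → D.eval x ≠ 0 →
      ∃ t, ρ (ev2 (RingHom.id _) x y f / D.eval x) = ev2 (RingHom.id _) x y (h t) / D.eval x) →
    ∃ x y, ρ x = x ∧ κ x ≠ x ∧ ev2 (RingHom.id _) x y g = 0 ∧ D.eval x ≠ 0 ∧
      ρ (ev2 (RingHom.id _) x y f / D.eval x) = ev2 (RingHom.id _) x y (h t) / D.eval x

/-- Finite specialisations: a correspondence between finitely generated rings. -/
def FC {A W : Type} [Field A] [Field W] (ρ κ : W →+* W) (i j : A →+* W) (c : W) (S : Finset W) :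
    Prop :=
  ∃ B : Subring (W × W), (∀ w, ((0 : W), w) ∈ B → w = 0) ∧ (∀ a, (i a, j a) ∈ B) ∧
    (∃ d, (c, d) ∈ B ∧ ρ d = d ∧ κ d ≠ d) ∧ ∀ s ∈ S, ∃ t, (s, t) ∈ B ∧ (ρ s, ρ t) ∈ B

/-- Subring of `W × W` consisting of pairs of fractions. -/
def fracSub {R W : Type*} [CommRing R] [Field W] (E E' : R →+* W) (D : R) (h : E D ≠ 0)
    (h' : E' D ≠ 0) : Subring (W × W) where
  carrier := {w | ∃ (N : R) (k : ℕ), w.1 = E N / E D ^ k ∧ w.2 = E' N / E' D ^ k}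
  zero_mem' := ⟨0, 0, by simp, by simp⟩
  one_mem' := ⟨1, 0, by simp, by simp⟩
  neg_mem' := by
    rintro _ ⟨N, k, h1, h2⟩
    exact ⟨-N, k, by simp [h1, neg_div], by simp [h2, neg_div]⟩
  mul_mem' := by
    rintro _ _ ⟨N, k, h1, h2⟩ ⟨M, l, h3, h4⟩
    refine ⟨N * M, k + l, ?_, ?_⟩
    · simp [h1, h3, pow_add]; field_simp
    · simp [h2, h4, pow_add]; field_simp
  add_mem' := by
    rintro _ _ ⟨N, k, h1, h2⟩ ⟨M, l, h3, h4⟩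
    refine ⟨N * D ^ l + M * D ^ k, k + l, ?_, ?_⟩
    · simp [h1, h3, pow_add]; field_simp
    · simp [h2, h4, pow_add]; field_simp

end Felg

end part10

section part11
open Polynomial Filter

namespace Felg

lemma rho_ev2 {A W : Type*} [Field A] [Field W] (ρ : W →+* W) (r : A →+* A) (i : A →+* W)
    (hi : ∀ a, i (r a) = ρ (i a)) (x y : W) (P : A[X][X]) :
    ρ (ev2 i x y P) = ev2 i (ρ x) (ρ y) (P.map (mapRingHom r)) := by
  have : ρ.comp i = i.comp r := RingHom.ext fun a => (hi a).symm
  rw [map_ev2, ev2_map, this]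

lemma rho_eval₂ {A W : Type*} [Field A] [Field W] (ρ : W →+* W) (r : A →+* A) (i : A →+* W)
    (hi : ∀ a, i (r a) = ρ (i a)) (x : W) (P : A[X]) :
    ρ (P.eval₂ i x) = (P.map r).eval₂ i (ρ x) := by
  have := rho_ev2 ρ r i hi x 0 (C P)
  simpa using this

theorem FC_sep {A W : Type} [Field A] [IsAlgClosed A] [Field W] [IsAlgClosed W] (ρ κ : W →+* W)
    (hpt : PointProp W ρ κ) (r : A →+* A) (i j : A →+* W) (hi : ∀ a, i (r a) = ρ (i a))
    (hj : ∀ a, j (r a) = ρ (j a)) (c : W) (hρc : ρ c = c)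
    (hc : ∀ f : A[X], f.eval₂ i c = 0 → f = 0) (S : Finset W) (hS : ∀ s ∈ S, Sep i c s) :
    FC ρ κ i j c S := by
  classical
  obtain ⟨z0, g0, α0, β0, D0, hg0, hirr0, hz0, hD0, -, hab0, hP⟩ := prim i c hc S hS 1 one_ne_zero
  set rr := mapRingHom r with hrr
  set D0r := D0.map r with hD0r
  have hD0r0 : D0r ≠ 0 := (Polynomial.map_ne_zero_iff r.injective).2 hD0
  set g0r := g0.map rr with hg0r
  have hg0rm : g0r.Monic := hg0.map _
  set n₀ := g0.natDegree with hn₀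
  have hg0rd : g0r.natDegree = n₀ := hg0.natDegree_map _
  obtain ⟨y, hy⟩ := split_fin (g0r.map (eval₂RingHom i c)) (hg0rm.map _) n₀ (by
    rw [hg0rm.natDegree_map, hg0rd])
  have hroot : ∀ w, ev2 i c w g0r = ∏ t, (w - y t) := by
    intro w
    rw [ev2_eq, hy, eval_prod]; simp
  obtain ⟨t1, ht1⟩ : ∃ t, ρ z0 = y t := by
    have h1 : ev2 i c (ρ z0) g0r = 0 := by
      have := rho_ev2 ρ r i hi c z0 g0
      rw [hz0, map_zero, hρc] at this
      exact this.symm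
    rw [hroot, Finset.prod_eq_zero_iff] at h1
    obtain ⟨t, -, ht⟩ := h1
    exact ⟨t, sub_eq_zero.1 ht⟩
  have hS2 : ∀ s ∈ insert z0 (Finset.univ.image y), Sep i c s := by
    intro s hs
    rcases Finset.mem_insert.1 hs with rfl | hs
    · exact ⟨g0, α0, β0, D0, hD0, hz0, hab0⟩
    · obtain ⟨t, -, rfl⟩ := Finset.mem_image.1 hs
      refine ⟨g0r, α0.map rr, β0.map rr, D0r, hD0r0, ?_, ?_⟩
      · rw [hroot]; exact Finset.prod_eq_zero (Finset.mem_univ t) (sub_self _)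
      · have := congrArg (Polynomial.map rr) hab0
        rw [Polynomial.map_add, Polynomial.map_mul, Polynomial.map_mul, ← derivative_map, map_C] at this
        exact this
  obtain ⟨z, g, α, β, D, hg, hirr, hz, hD, ⟨D1, hD1⟩, hab, hQ⟩ :=
    prim i c hc _ hS2 (D0 * D0r) (mul_ne_zero hD0 hD0r0)
  obtain ⟨f0, hf0⟩ := hQ z0 (Finset.mem_insert_self _ _)
  choose h hh using fun t => hQ (y t)
    (Finset.mem_insert_of_mem (Finset.mem_image_of_mem _ (Finset.mem_univ t)))
  have hDc : D.eval₂ i c ≠ 0 := fun h => hD (hc _ h)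
  have hf0' : ev2 i c z f0 / D.eval₂ i c = z0 := by rw [← hf0]; field_simp
  have hh' : ∀ t, ev2 i c z (h t) / D.eval₂ i c = y t := fun t => by rw [← hh]; field_simp
  have hgf : g ∣ hom g0 f0 D n₀ := by
    refine ker_ev2 i c z hc hg hirr hz _ ?_
    rw [ev2_hom i c z g0 f0 D n₀ le_rfl hDc, hf0', hz0, mul_zero]
  -- the covering identity
  have hcov : ∀ x y, ρ x = x → ev2 j x y g = 0 → D.eval₂ j x ≠ 0 →
      ∃ t, ρ (ev2 j x y f0 / D.eval₂ j x) = ev2 j x y (h t) / D.eval₂ j x := by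
    intro x y' hx hxy hDx
    set Q : A[X][X][X] := C (C D) ^ n₀ * g0r.map C - ∏ t, (C (C D) * X - C (h t)) with hQdef
    have hQ1 : Q.map (ev2 i c z) = 0 := by
      have h1 : (ev2 i c z).comp C = eval₂RingHom i c := by ext <;> simp [ev2]
      rw [hQdef, Polynomial.map_sub, Polynomial.map_mul, Polynomial.map_pow, map_C, Polynomial.map_map,
        h1, hy, Polynomial.map_prod, ev2_C]
      simp only [Polynomial.map_sub, Polynomial.map_mul, map_C, map_X, ev2_C]
      have h2 : (C (D.eval₂ i c) : W[X]) ^ n₀ = ∏ t : Fin n₀, C (D.eval₂ i c) := by simp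
      rw [h2, ← Finset.prod_mul_distrib, sub_eq_zero]
      refine Finset.prod_congr rfl fun t _ => ?_
      rw [mul_sub, ← C_mul, mul_comm _ (y t), hh]
    have hQ2 : Q.map (ev2 j x y') = 0 := by
      ext k
      have h1 := congrArg (fun P => P.coeff k) hQ1
      simp only [coeff_map, coeff_zero] at h1 ⊢
      obtain ⟨w, hw⟩ := ker_ev2 i c z hc hg hirr hz _ h1
      rw [hw, map_mul, hxy, zero_mul]
    have h1 : (ev2 j x y').comp C = eval₂RingHom j x := by ext <;> simp [ev2]
    have h3 := congrArg (eval (ρ (ev2 j x y' f0 / D.eval₂ j x))) hQ2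
    rw [hQdef, Polynomial.map_sub, Polynomial.map_mul, Polynomial.map_pow, map_C, Polynomial.map_map,
        h1, Polynomial.map_prod, ev2_C, eval_sub, eval_mul, ← ev2_eq, eval_prod, eval_zero] at h3
    have h4 : ev2 j x (ρ (ev2 j x y' f0 / D.eval₂ j x)) g0r = 0 := by
      have h5 := rho_ev2 ρ r j hj x (ev2 j x y' f0 / D.eval₂ j x) g0
      rw [hx] at h5
      rw [hg0r, hrr, ← h5]
      have h6 := ev2_hom j x y' g0 f0 D n₀ le_rfl hDx
      obtain ⟨w, hw⟩ := hgf
      rw [hw, map_mul, hxy, zero_mul] at h6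
      rcases mul_eq_zero.1 h6.symm with h7 | h7
      · exact absurd h7 (pow_ne_zero _ hDx)
      · rw [h7, map_zero]
    rw [h4, mul_zero, zero_sub, neg_eq_zero, Finset.prod_eq_zero_iff] at h3
    obtain ⟨t, -, ht⟩ := h3
    refine ⟨t, ?_⟩
    simp only [Polynomial.map_sub, Polynomial.map_mul, map_C, map_X, ev2_C, eval_sub, eval_mul, eval_C,
      eval_X] at ht
    rw [eq_div_iff hDx, mul_comm]
    exact sub_eq_zero.1 ht
  -- the specialised point
  set jj := mapRingHom j with hjj
  have hevj : ∀ x y P, ev2 (RingHom.id W) x y (P.map jj) = ev2 j x y P := by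
    intro x y P
    rw [hjj, ev2_map, RingHom.id_comp]
  have hevD : ∀ x (P : A[X]), (P.map j).eval x = P.eval₂ j x := fun x P => eval_map _ _
  obtain ⟨x0, z', hx0, hκ, hgz', hDx0, hρz'⟩ := hpt (g.map jj) (α.map jj) (β.map jj) (D.map j)
    (g0.map jj) (f0.map jj) n₀ (fun t => (h t).map jj) t1 (hg.map _) (irreducible_map j hg hirr)
    ((Polynomial.map_ne_zero_iff j.injective).2 hD)
    (by
      have := congrArg (Polynomial.map jj) hab
      rw [Polynomial.map_add, Polynomial.map_mul, Polynomial.map_mul, ← derivative_map, map_C] at this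
      exact this)
    (hg0.map _) (irreducible_map j hg0 hirr0) (hg0.natDegree_map _)
    (by
      have := Polynomial.map_dvd jj hgf
      simpa [hom, Polynomial.map_sum, hjj] using this)
    (by
      simp only [hevj, hevD]
      exact hcov)
  simp only [hevj, hevD] at hgz' hDx0 hρz'
  have hE : ev2 i c z (C D) ≠ 0 := by rwa [ev2_C]
  have hE' : ev2 j x0 z' (C D) ≠ 0 := by rwa [ev2_C]
  have hDi : D.eval₂ i c = D0.eval₂ i c * D0r.eval₂ i c * D1.eval₂ i c := by
    rw [hD1, eval₂_mul, eval₂_mul]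
  have hDj : D.eval₂ j x0 = D0.eval₂ j x0 * D0r.eval₂ j x0 * D1.eval₂ j x0 := by
    rw [hD1, eval₂_mul, eval₂_mul]
  refine ⟨fracSub (ev2 i c z) (ev2 j x0 z') (C D) hE hE', ?_, ?_, ?_, ?_⟩
  · rintro w ⟨N, k, h1, h2⟩
    simp only at h1 h2
    have h3 : ev2 i c z N = 0 := by
      rcases div_eq_zero_iff.1 h1.symm with h | h
      · exact h
      · exact absurd h (pow_ne_zero _ hE)
    obtain ⟨w', hw'⟩ := ker_ev2 i c z hc hg hirr hz _ h3
    rw [h2, hw', map_mul, hgz', zero_mul, zero_div]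
  · exact fun a => ⟨C (C a), 0, by simp, by simp⟩
  · exact ⟨x0, ⟨C X, 0, by simp, by simp⟩, hx0, hκ⟩
  · intro s hs
    obtain ⟨P, hP⟩ := hP s hs
    have hn1 : (P.map rr).natDegree ≤ P.natDegree := natDegree_map_le
    have e1 := ev2_hom i c z P f0 D _ le_rfl hDc
    have e2 := ev2_hom j x0 z' P f0 D _ le_rfl hDx0
    have e3 := ev2_hom i c z (P.map rr) (h t1) D _ hn1 hDc
    have e4 := ev2_hom j x0 z' (P.map rr) (h t1) D _ hn1 hDx0
    rw [hf0', ← hP] at e1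
    have e5 := rho_ev2 ρ r i hi c z0 P
    rw [hρc, ht1, ← hP, map_mul, rho_eval₂ ρ r i hi, hρc] at e5
    rw [hh', ← e5] at e3
    have e6 := rho_ev2 ρ r j hj x0 (ev2 j x0 z' f0 / D.eval₂ j x0) P
    rw [hx0, hρz'] at e6
    rw [← e6] at e4
    have h0 := hDc
    have h0' := hDx0
    rw [hDi] at h0
    rw [hDj] at h0'
    simp only [mul_ne_zero_iff] at h0 h0'
    refine ⟨ev2 j x0 (ev2 j x0 z' f0 / D.eval₂ j x0) P / D0.eval₂ j x0,
      ⟨hom P f0 D P.natDegree * C (D0r * D1), P.natDegree + 1, ?_, ?_⟩,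
      ⟨hom (P.map rr) (h t1) D P.natDegree * C (D0 * D1), P.natDegree + 1, ?_, ?_⟩⟩
    · simp only [map_mul, ev2_C, eval₂_mul, e1, pow_succ]
      rw [eq_div_iff (mul_ne_zero (pow_ne_zero _ hDc) hDc)]
      nth_rewrite 2 [hDi]
      ring
    · simp only [map_mul, ev2_C, eval₂_mul, e2, pow_succ]
      rw [eq_div_iff (mul_ne_zero (pow_ne_zero _ hDx0) hDx0), div_mul_eq_mul_div,
        div_eq_iff h0'.1.1]
      nth_rewrite 3 [hDj]
      ring
    · simp only [map_mul, ev2_C, eval₂_mul, e3, pow_succ]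
      rw [eq_div_iff (mul_ne_zero (pow_ne_zero _ hDc) hDc)]
      nth_rewrite 2 [hDi]
      ring
    · simp only [map_mul, ev2_C, eval₂_mul, e4, pow_succ, map_div₀]
      rw [rho_eval₂ ρ r j hj, hx0, eq_div_iff (mul_ne_zero (pow_ne_zero _ hDx0) hDx0), div_mul_eq_mul_div,
        div_eq_iff h0'.1.2]
      nth_rewrite 3 [hDj]
      ring

end Felg

end part11

section part12
open Polynomial Filter

namespace Felg

/-- Algebraicity over `A(c)`. -/
def Alg {A W : Type*} [Field A] [Field W] (i : A →+* W) (c s : W) : Prop :=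
  ∃ G : A[X][X], G ≠ 0 ∧ ev2 i c s G = 0

lemma alg_sep {A W : Type*} [Field A] [Field W] (q : ℕ) [ExpChar W q] (i : A →+* W) (c : W)
    (hc : ∀ f : A[X], f.eval₂ i c = 0 → f = 0) (s : W) (hs : Alg i c s) :
    ∃ m, ∀ m', m ≤ m' → Sep i c (s ^ q ^ m') := by
  classical
  let φ : A[X] →+* W := eval₂RingHom i c
  have hφ : Function.Injective φ := (injective_iff_map_eq_zero φ).2 hc
  let K := FractionRing A[X]
  have hinj : Function.Injective (algebraMap A[X] K) := IsFractionRing.injective A[X] K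
  let ψ : K →+* W := IsFractionRing.lift hφ
  have hψ : ψ.comp (algebraMap A[X] K) = φ := by
    exact RingHom.ext fun x => IsFractionRing.lift_algebraMap hφ x
  let _ : Algebra K W := ψ.toAlgebra
  let _ : Algebra A[X] W := φ.toAlgebra
  have : IsScalarTower A[X] K W := IsScalarTower.of_algebraMap_eq' hψ.symm
  have hev : ∀ (z : W) (Q : A[X][X]), aeval z (Q.map (algebraMap A[X] K)) = ev2 i c z Q := by
    intro z Q
    rw [aeval_map_algebraMap, aeval_def]
    rfl
  have hK : ExpChar K q := (RingHom.expChar_iff ψ ψ.injective q).2 inferInstance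
  have hsi : IsIntegral K s := by
    obtain ⟨G, hG, hs⟩ := hs
    refine IsAlgebraic.isIntegral ⟨G.map (algebraMap A[X] K), (Polynomial.map_ne_zero_iff hinj).2 hG, ?_⟩
    rw [hev, hs]
  obtain ⟨f, hf, m, hm⟩ := Irreducible.hasSeparableContraction q (minpoly.irreducible hsi)
  have h1 : IsSeparable K (s ^ q ^ m) := by
    refine hf.of_dvd (minpoly.dvd K _ ?_)
    rw [← expand_aeval, hm, minpoly.aeval]
  refine ⟨m, fun m' hm' => ?_⟩
  have h2 : IsSeparable K (s ^ q ^ m') := by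
    have h3 : s ^ q ^ m' = (s ^ q ^ m) ^ q ^ (m' - m) := by
      rw [← pow_mul, ← pow_add]; congr 2; omega
    rw [h3]
    exact mem_separableClosure_iff.1 (pow_mem (mem_separableClosure_iff.2 h1) _)
  obtain ⟨α, β, hab⟩ := h2
  obtain ⟨α', d1, hd1, hα⟩ := clear_den α
  obtain ⟨β', d2, hd2, hβ⟩ := clear_den β
  obtain ⟨g, d3, hd3, hg⟩ := clear_den (minpoly K (s ^ q ^ m'))
  refine ⟨g, C d2 * α', C d1 * β', d1 * d2 * d3, mul_ne_zero (mul_ne_zero hd1 hd2) hd3, ?_, ?_⟩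
  · rw [← hev, hg, map_mul, minpoly.aeval, mul_zero]
  · apply map_injective _ hinj
    rw [Polynomial.map_add, Polynomial.map_mul, Polynomial.map_mul, Polynomial.map_mul,
      Polynomial.map_mul, ← derivative_map, map_C, map_C, map_C, hα, hβ, hg, derivative_C_mul]
    simp only [map_mul]
    linear_combination (C (algebraMap A[X] K d1) * C (algebraMap A[X] K d2) * C (algebraMap A[X] K d3)) * hab

theorem FC_alg {A W : Type} [Field A] [IsAlgClosed A] [Field W] [IsAlgClosed W] (ρ κ : W →+* W)
    (hpt : PointProp W ρ κ) (r : A →+* A) (i j : A →+* W) (hi : ∀ a, i (r a) = ρ (i a))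
    (hj : ∀ a, j (r a) = ρ (j a)) (c : W) (hρc : ρ c = c)
    (hc : ∀ f : A[X], f.eval₂ i c = 0 → f = 0) (S : Finset W) (hS : ∀ s ∈ S, Alg i c s) :
    FC ρ κ i j c S := by
  classical
  obtain ⟨q, hq⟩ := ExpChar.exists W
  choose! m hm using fun s hs => alg_sep q i c hc s (hS s hs)
  set M := S.sup m with hM
  obtain ⟨B, h1, h2, ⟨d, h3, h3', h3''⟩, h4⟩ := FC_sep ρ κ hpt r i j hi hj c hρc hc
    (S.image fun s => s ^ q ^ M) (by
      intro s hs
      obtain ⟨s', hs', rfl⟩ := Finset.mem_image.1 hs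
      exact hm s' hs' M (Finset.le_sup hs'))
  have hQ : q ^ M ≠ 0 := (pow_pos (expChar_pos W q) M).ne'
  let Φ : W × W →+* W × W := RingHom.prodMap (iterateFrobenius W q M) (iterateFrobenius W q M)
  have hΦ : ∀ w, w ∈ B.comap Φ ↔ (w.1 ^ q ^ M, w.2 ^ q ^ M) ∈ B := fun w => Iff.rfl
  refine ⟨B.comap Φ, ?_, ?_, ?_, ?_⟩
  · intro w hw
    rw [hΦ] at hw
    simp only [zero_pow hQ] at hw
    exact pow_eq_zero_iff hQ |>.1 (h1 _ hw)
  · intro a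
    rw [hΦ]
    simp only [← map_pow]
    exact h2 _
  · refine ⟨d, ?_, h3', h3''⟩
    rw [hΦ]
    exact pow_mem h3 (q ^ M)
  · intro s hs
    obtain ⟨t, ht, ht'⟩ := h4 _ (Finset.mem_image_of_mem _ hs)
    obtain ⟨s', rfl⟩ := IsAlgClosed.exists_pow_nat_eq t (Nat.pos_of_ne_zero hQ)
    refine ⟨s', ht, ?_⟩
    rw [hΦ]
    simpa using ht'

end Felg

end part12

section part13
open Polynomial Filter

namespace Felg

lemma countable_poly (R : Type*) [Semiring R] [Countable R] : Countable R[X] := by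
  rw [← Cardinal.mk_le_aleph0_iff]
  refine cardinalMk_le_max.trans (max_le ?_ le_rfl)
  exact Cardinal.mk_le_aleph0_iff.2 inferInstance

lemma exists_ext {A W : Type} [Field A] [Countable A] [Field W] [IsAlgClosed W] (i : A →+* W) (c : W)
    (hc : ∀ f : A[X], f.eval₂ i c = 0 → f = 0) :
    ∃ A' : Subfield W, Countable A' ∧ IsAlgClosed A' ∧ ∀ s, s ∈ A' ↔ Alg i c s := by
  let φ : A[X] →+* W := eval₂RingHom i c
  have hφ : Function.Injective φ := (injective_iff_map_eq_zero φ).2 hc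
  let K := FractionRing A[X]
  let ψ : K →+* W := IsFractionRing.lift hφ
  have hψ : ψ.comp (algebraMap A[X] K) = φ := by
    exact RingHom.ext fun x => IsFractionRing.lift_algebraMap hφ x
  let _ : Algebra K W := ψ.toAlgebra
  let _ : Algebra A[X] W := φ.toAlgebra
  have : IsScalarTower A[X] K W := IsScalarTower.of_algebraMap_eq' hψ.symm
  have hmem : ∀ s, s ∈ algebraicClosure K W ↔ IsAlgebraic A[X] s := by
    intro s
    rw [mem_algebraicClosure_iff]
    exact (IsFractionRing.isAlgebraic_iff A[X] K W).symm
  refine ⟨(algebraicClosure K W).toSubfield, ?_, ?_, ?_⟩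
  · have := countable_poly A
    have : FaithfulSMul A[X] W := (faithfulSMul_iff_algebraMap_injective _ _).2 hφ
    have h1 := Algebraic.countable A[X] W
    have h2 : ((algebraicClosure K W).toSubfield : Set W) = {x | IsAlgebraic A[X] x} :=
      Set.ext hmem
    exact (h2 ▸ h1).to_subtype
  · exact (algebraicClosure.isAlgClosure K W).1
  · exact hmem

lemma mem_range_of_root {A W : Type*} [Field A] [IsAlgClosed A] [Field W] (i : A →+* W) (c : W)
    (f : A[X]) (hf : f ≠ 0) (h : f.eval₂ i c = 0) : ∃ a, i a = c := by
  have h1 := (IsAlgClosed.splits f).eq_prod_roots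
  rw [h1, eval₂_mul, eval₂_C, ← coe_eval₂RingHom, map_multiset_prod, Multiset.map_map] at h
  rcases mul_eq_zero.1 h with h | h
  · rw [map_eq_zero, leadingCoeff_eq_zero] at h; exact absurd h hf
  · obtain ⟨a, -, ha⟩ := Multiset.mem_map.1 (Multiset.prod_eq_zero_iff.1 h)
    refine ⟨a, ?_⟩
    simp at ha
    exact (sub_eq_zero.1 ha).symm

lemma Alg.rho {A W : Type*} [Field A] [Field W] {ρ : W →+* W} {r : A →+* A} {i : A →+* W}
    (hi : ∀ a, i (r a) = ρ (i a)) {c : W} (hρc : ρ c = c) {s : W} (hs : Alg i c s) :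
    Alg i c (ρ s) := by
  obtain ⟨G, hG, h⟩ := hs
  refine ⟨G.map (mapRingHom r), ?_, ?_⟩
  · exact (Polynomial.map_ne_zero_iff (map_injective _ r.injective)).2 hG
  · have := rho_ev2 ρ r i hi c s G
    rw [h, map_zero, hρc] at this
    exact this.symm

section ultra
variable (K : ℕ → Type) [∀ i, Field (K i)] (U : Ultrafilter ℕ)

theorem forth_transc [∀ n, IsAlgClosed (K n)] (hU : (U : Filter ℕ) ≤ cofinite) (r s : ∀ n, K n →+* K n)
    (hpt : PointProp (UW K U) (urho K U r) (urho K U s))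
    {A : Type} [Field A] [IsAlgClosed A] [Countable A] (rA : A →+* A) (i j : A →+* UW K U)
    (hi : ∀ a, i (rA a) = urho K U r (i a)) (hj : ∀ a, j (rA a) = urho K U r (j a))
    (c : UW K U) (hρc : urho K U r c = c) (hc : ∀ f : A[X], f.eval₂ i c = 0 → f = 0) :
    ∃ (A' : Type) (_ : Field A') (_ : IsAlgClosed A') (_ : Countable A') (r' : A' →+* A')
      (i' j' : A' →+* UW K U) (u : A → A') (γ : A'), (∀ a, i' (r' a) = urho K U r (i' a)) ∧
      (∀ a, j' (r' a) = urho K U r (j' a)) ∧ (∀ a, i' (u a) = i a ∧ j' (u a) = j a) ∧ i' γ = c ∧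
      urho K U s (j' γ) ≠ j' γ := by
  classical
  set ρ := urho K U r with hρ
  set κ := urho K U s with hκ
  obtain ⟨A', hcount, hac, hmem⟩ := exists_ext i c hc
  have hu : ∀ a, i a ∈ A' := fun a => (hmem _).2 ⟨X - C (C a), X_sub_C_ne_zero _, by simp⟩
  have hγ : c ∈ A' := (hmem _).2 ⟨X - C X, X_sub_C_ne_zero _, by simp⟩
  have hr : ∀ a ∈ A', ρ a ∈ A' := fun a ha => (hmem _).2 (((hmem _).1 ha).rho hi hρc)
  let r' : A' →+* A' := (ρ.comp A'.subtype).codRestrict A' fun a => hr _ a.2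
  choose jl hjl using fun a => um_surj K U (j a)
  let γ : A' := ⟨c, hγ⟩
  let u : A → A' := fun a => ⟨i a, hu a⟩
  let Cn : (A' × A' × A) → ∀ n, (A' → K n) → Prop := fun t n x =>
    x (t.1 + t.2.1) = x t.1 + x t.2.1 ∧ x (t.1 * t.2.1) = x t.1 * x t.2.1 ∧
    x (r' t.1) = r n (x t.1) ∧ x (u t.2.2) = jl t.2.2 n ∧ s n (x γ) ≠ x γ
  obtain ⟨x, hx⟩ := saturation U hU Cn (by
    intro T
    obtain ⟨B, hB0, hBi, ⟨d, hBd, hd1, hd2⟩, hBS⟩ := FC_alg ρ κ hpt rA i j hi hj c hρc hc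
      (T.image (fun t => (t.1 : UW K U)) ∪ T.image (fun t => (t.2.1 : UW K U))) (by
        intro w hw
        rcases Finset.mem_union.1 hw with hw | hw
        · obtain ⟨t, -, rfl⟩ := Finset.mem_image.1 hw
          exact (hmem _).1 t.1.2
        · obtain ⟨t, -, rfl⟩ := Finset.mem_image.1 hw
          exact (hmem _).1 t.2.1.2)
    have huniq : ∀ w w1 w2, (w, w1) ∈ B → (w, w2) ∈ B → w1 = w2 := by
      intro w w1 w2 h1 h2
      have h3 := sub_mem h1 h2
      rw [Prod.mk_sub_mk, sub_self] at h3
      exact sub_eq_zero.1 (hB0 _ h3)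
    let xW : A' → UW K U := fun a => if h : ∃ w, ((a : UW K U), w) ∈ B then h.choose else 0
    have hxW : ∀ (a : A') w, ((a : UW K U), w) ∈ B → xW a = w := by
      intro a w h
      have h' : ∃ w, ((a : UW K U), w) ∈ B := ⟨w, h⟩
      refine huniq a _ _ ?_ h
      simp only [xW, dif_pos h']
      exact h'.choose_spec
    choose xl hxl using fun a => um_surj K U (xW a)
    have key : ∀ t ∈ T, ∀ᶠ n in (U : Filter ℕ), Cn t n (fun a => xl a n) := by
      intro t ht
      obtain ⟨a', ha1, ha2⟩ := hBS t.1
        (Finset.mem_union_left _ (Finset.mem_image.2 ⟨t, ht, rfl⟩))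
      obtain ⟨b', hb1, -⟩ := hBS t.2.1
        (Finset.mem_union_right _ (Finset.mem_image.2 ⟨t, ht, rfl⟩))
      have e1 := hxW t.1 a' ha1
      have e2 := hxW t.2.1 b' hb1
      have e3 : xW (t.1 + t.2.1) = a' + b' := hxW _ _ (add_mem ha1 hb1)
      have e4 : xW (t.1 * t.2.1) = a' * b' := hxW _ _ (mul_mem ha1 hb1)
      have e5 : xW (r' t.1) = ρ a' := hxW _ _ ha2
      have e6 : xW (u t.2.2) = j t.2.2 := hxW _ _ (hBi _)
      have e7 : xW γ = d := hxW _ _ hBd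
      rw [← e1, ← e2, ← hxl, ← hxl, ← hxl, ← map_add, um_eq] at e3
      rw [← e1, ← e2, ← hxl, ← hxl, ← hxl, ← map_mul, um_eq] at e4
      rw [← e1, ← hxl, ← hxl, hρ, urho_um, um_eq] at e5
      rw [← hxl, ← hjl, um_eq] at e6
      rw [← e7, ← hxl, hκ, urho_um, Ne, um_eq, ← Ultrafilter.eventually_not] at hd2
      filter_upwards [e3, e4, e5, e6, hd2] with n h1 h2 h3 h4 h5
      exact ⟨h1, h2, h3, h4, h5⟩
    filter_upwards [(Filter.eventually_all_finset T).2 key] with n hn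
    exact ⟨fun a => xl a n, hn⟩)
  have hu1 : u 1 = 1 := Subtype.ext (map_one i)
  let jf : A' → UW K U := fun a => um K U fun n => x n a
  have hadd : ∀ a b, jf (a + b) = jf a + jf b := by
    intro a b
    change um K U _ = um K U _ + um K U _
    rw [← map_add, um_eq]
    filter_upwards [hx (a, b, 0)] with n hn using hn.1
  have hmul : ∀ a b, jf (a * b) = jf a * jf b := by
    intro a b
    change um K U _ = um K U _ * um K U _
    rw [← map_mul, um_eq]
    filter_upwards [hx (a, b, 0)] with n hn using hn.2.1
  have hju : ∀ a, jf (u a) = j a := by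
    intro a
    rw [← hjl]
    change um K U _ = um K U _
    rw [um_eq]
    filter_upwards [hx (0, 0, a)] with n hn using hn.2.2.2.1
  have hone : jf 1 = 1 := by rw [← hu1, hju, map_one]
  have hzero : jf 0 = 0 := by
    have := hadd 0 0
    rw [add_zero] at this
    exact left_eq_add.1 this
  let j' : A' →+* UW K U :=
    { toFun := jf, map_one' := hone, map_mul' := hmul, map_zero' := hzero, map_add' := hadd }
  refine ⟨A', inferInstance, hac, hcount, r', A'.subtype, j', u, γ, fun a => rfl, ?_, ?_, rfl, ?_⟩
  · intro a
    change um K U _ = ρ (um K U _)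
    rw [hρ, urho_um, um_eq]
    filter_upwards [hx (a, 0, 0)] with n hn using hn.2.2.1
  · exact fun a => ⟨rfl, hju a⟩
  · change κ (um K U _) ≠ um K U _
    rw [hκ, urho_um, Ne, um_eq, ← Ultrafilter.eventually_not]
    filter_upwards [hx (0, 0, 0)] with n hn using hn.2.2.2.2

/-- The back and forth relation. -/
def BF {ι : Type*} (r : ∀ n, K n →+* K n) (a b : ι → UW K U) : Prop :=
  ∃ (A : Type) (_ : Field A) (_ : IsAlgClosed A) (_ : Countable A) (rA : A →+* A)
    (i j : A →+* UW K U), (∀ a, i (rA a) = urho K U r (i a)) ∧ (∀ a, j (rA a) = urho K U r (j a)) ∧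
    ∀ k, ∃ α, i α = a k ∧ j α = b k

lemma BF.symm {K : ℕ → Type} [∀ i, Field (K i)] {U : Ultrafilter ℕ} {ι : Type*}
    {r : ∀ n, K n →+* K n} {a b : ι → UW K U}
    (h : BF K U r a b) : BF K U r b a := by
  obtain ⟨A, h1, h2, h3, rA, i, j, hi, hj, h⟩ := h
  exact ⟨A, h1, h2, h3, rA, j, i, hj, hi, fun k => (h k).imp fun _ h => ⟨h.2, h.1⟩⟩

theorem BF.forth {K : ℕ → Type} [∀ i, Field (K i)] {U : Ultrafilter ℕ} [∀ n, IsAlgClosed (K n)]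
    (hU : (U : Filter ℕ) ≤ cofinite) {r s : ∀ n, K n →+* K n}
    (hpt : PointProp (UW K U) (urho K U r) (urho K U s)) {ι : Type*} {a b : ι → UW K U}
    (h : BF K U r a b) (c : UW K U) (hc : urho K U r c = c) : ∃ d, urho K U r d = d ∧
      ∀ {ι' : Type} (f : ι' → Option ι),
        BF K U r (fun k => (f k).elim c a) (fun k => (f k).elim d b) := by
  obtain ⟨A, h1, h2, h3, rA, i, j, hi, hj, h⟩ := h
  by_cases hcA : ∀ f : A[X], f.eval₂ i c = 0 → f = 0
  · obtain ⟨A', h1', h2', h3', r', i', j', u, γ, hi', hj', hu, hγ, -⟩ :=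
      forth_transc K U hU r s hpt rA i j hi hj c hc hcA
    refine ⟨j' γ, ?_, fun f => ⟨A', h1', h2', h3', r', i', j', hi', hj', fun k => ?_⟩⟩
    · rw [← hj']
      congr 1
      apply i'.injective
      rw [hi', hγ, hc]
    · beta_reduce
      cases f k with
      | none => exact ⟨γ, hγ, rfl⟩
      | some k =>
        obtain ⟨α, hα⟩ := h k
        exact ⟨u α, (hu α).1.trans hα.1, (hu α).2.trans hα.2⟩
  · push Not at hcA
    obtain ⟨f, hf, hf0⟩ := hcA
    obtain ⟨γ, rfl⟩ := mem_range_of_root i c f hf0 hf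
    refine ⟨j γ, ?_, fun f => ⟨A, h1, h2, h3, rA, i, j, hi, hj, fun k => ?_⟩⟩
    · rw [← hj]
      congr 1
      apply i.injective
      rw [hi, hc]
    · beta_reduce
      cases f k with
      | none => exact ⟨γ, rfl, rfl⟩
      | some k => exact h k

end ultra
end Felg

end part13

section part14
open Polynomial Filter

namespace Felg

open FirstOrder

section form
variable {K : ℕ → Type} [∀ n, Field (K n)] {U : Ultrafilter ℕ} {M : ℕ → Type} [∀ n, Field (M n)]

/-- The class of a sequence in the ultraproduct. -/
noncomputable def em (U : Ultrafilter ℕ) (ε : ∀ n, M n →+* K n) (v : ∀ n, M n) : UW K U :=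
  um K U fun n => ε n (v n)

lemma em_eq (ε : ∀ n, M n →+* K n) (v w : ∀ n, M n) :
    em U ε v = em U ε w ↔ ∀ᶠ n in (U : Filter ℕ), v n = w n := by
  rw [em, em, um_eq]
  exact eventually_congr (Eventually.of_forall fun n => (ε n).injective.eq_iff)

lemma elim_snoc_eq {α : Type} {l : ℕ} (ε : ∀ n, M n →+* K n) (v : α → ∀ n, M n)
    (xs : Fin l → ∀ n, M n) (x : ∀ n, M n) :
    (fun k : α ⊕ Fin (l + 1) => em U ε (Sum.elim v (Fin.snoc xs x : Fin (l + 1) → ∀ n, M n) k)) =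
    fun k : α ⊕ Fin (l + 1) => ((Sum.elim (fun a => some (Sum.inl a))
      (fun k => Fin.lastCases (motive := fun _ => Option (α ⊕ Fin l)) none
        (fun k => some (Sum.inr k)) k) k : Option (α ⊕ Fin l))).elim
      (em U ε x) (fun k => em U ε (Sum.elim v xs k)) := by
  funext k
  rcases k with a | k
  · rfl
  · refine Fin.lastCases ?_ (fun k => ?_) k
    · simp
    · simp

lemma snoc_apply {l : ℕ} (xs : Fin l → ∀ n, M n) (x : ∀ n, M n) (n : ℕ) :
    (fun k => (Fin.snoc xs x : Fin (l + 1) → ∀ n, M n) k n) =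
      (Fin.snoc (fun k => xs k n) (x n) : Fin (l + 1) → M n) := by
  funext k
  refine Fin.lastCases ?_ (fun k => ?_) k
  · simp
  · simp

lemma elim_apply {α : Type} {l : ℕ} (v : α → ∀ n, M n) (xs : Fin l → ∀ n, M n) (n : ℕ) :
    (fun k => Sum.elim v xs k n) = Sum.elim (fun k => v k n) (fun k => xs k n) := by
  funext k
  rcases k with a | k <;> rfl

variable [∀ n, Ring.CompatibleRing (M n)]

lemma term_val (ε : ∀ n, M n →+* K n) {A : Type} [Field A] (i j : A →+* UW K U) {α : Type}
    (v w : α → ∀ n, M n) (h : ∀ k, ∃ a, i a = em U ε (v k) ∧ j a = em U ε (w k))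
    (t : Language.ring.Term α) :
    ∃ a, i a = em U ε (fun n => t.realize fun k => v k n) ∧
      j a = em U ε (fun n => t.realize fun k => w k n) := by
  induction t with
  | var k => exact h k
  | func f ts ih =>
    cases f with
    | add =>
      obtain ⟨a, ha, ha'⟩ := ih 0
      obtain ⟨b, hb, hb'⟩ := ih 1
      refine ⟨a + b, ?_, ?_⟩
      · rw [map_add, ha, hb, em, em, em, ← map_add, um_eq]
        refine Eventually.of_forall fun n => ?_
        rw [Pi.add_apply, ← map_add]
        congr 1
        exact (Ring.CompatibleRing.funMap_add (R := M n) fun m => (ts m).realize fun k => v k n).symm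
      · rw [map_add, ha', hb', em, em, em, ← map_add, um_eq]
        refine Eventually.of_forall fun n => ?_
        rw [Pi.add_apply, ← map_add]
        congr 1
        exact (Ring.CompatibleRing.funMap_add (R := M n) fun m => (ts m).realize fun k => w k n).symm
    | mul =>
      obtain ⟨a, ha, ha'⟩ := ih 0
      obtain ⟨b, hb, hb'⟩ := ih 1
      refine ⟨a * b, ?_, ?_⟩
      · rw [map_mul, ha, hb, em, em, em, ← map_mul, um_eq]
        refine Eventually.of_forall fun n => ?_
        rw [Pi.mul_apply, ← map_mul]
        congr 1
        exact (Ring.CompatibleRing.funMap_mul (R := M n) fun m => (ts m).realize fun k => v k n).symm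
      · rw [map_mul, ha', hb', em, em, em, ← map_mul, um_eq]
        refine Eventually.of_forall fun n => ?_
        rw [Pi.mul_apply, ← map_mul]
        congr 1
        exact (Ring.CompatibleRing.funMap_mul (R := M n) fun m => (ts m).realize fun k => w k n).symm
    | neg =>
      obtain ⟨a, ha, ha'⟩ := ih 0
      refine ⟨-a, ?_, ?_⟩
      · rw [map_neg, ha, em, em, ← map_neg, um_eq]
        refine Eventually.of_forall fun n => ?_
        rw [Pi.neg_apply, ← map_neg]
        congr 1
        exact (Ring.CompatibleRing.funMap_neg (R := M n) fun m => (ts m).realize fun k => v k n).symm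
      · rw [map_neg, ha', em, em, ← map_neg, um_eq]
        refine Eventually.of_forall fun n => ?_
        rw [Pi.neg_apply, ← map_neg]
        congr 1
        exact (Ring.CompatibleRing.funMap_neg (R := M n) fun m => (ts m).realize fun k => w k n).symm
    | zero =>
      refine ⟨0, ?_, ?_⟩
      · rw [map_zero, em, ← map_zero (um K U), um_eq]
        refine Eventually.of_forall fun n => ?_
        rw [Pi.zero_apply, ← map_zero (ε n)]
        congr 1
        exact (Ring.CompatibleRing.funMap_zero (R := M n) fun m => (ts m).realize fun k => v k n).symm
      · rw [map_zero, em, ← map_zero (um K U), um_eq]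
        refine Eventually.of_forall fun n => ?_
        rw [Pi.zero_apply, ← map_zero (ε n)]
        congr 1
        exact (Ring.CompatibleRing.funMap_zero (R := M n) fun m => (ts m).realize fun k => w k n).symm
    | one =>
      refine ⟨1, ?_, ?_⟩
      · rw [map_one, em, ← map_one (um K U), um_eq]
        refine Eventually.of_forall fun n => ?_
        rw [Pi.one_apply, ← map_one (ε n)]
        congr 1
        exact (Ring.CompatibleRing.funMap_one (R := M n) fun m => (ts m).realize fun k => v k n).symm
      · rw [map_one, em, ← map_one (um K U), um_eq]
        refine Eventually.of_forall fun n => ?_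
        rw [Pi.one_apply, ← map_one (ε n)]
        congr 1
        exact (Ring.CompatibleRing.funMap_one (R := M n) fun m => (ts m).realize fun k => w k n).symm

theorem formula_transfer [∀ n, IsAlgClosed (K n)]
    (hU : (U : Filter ℕ) ≤ cofinite) {r s : ∀ n, K n →+* K n}
    (hpt : PointProp (UW K U) (urho K U r) (urho K U s)) (ε : ∀ n, M n →+* K n)
    (hε : ∀ n x, r n x = x ↔ ∃ y, ε n y = x) {α : Type} {l : ℕ}
    (φ : Language.ring.BoundedFormula α l) (v w : α → ∀ n, M n) (xs ys : Fin l → ∀ n, M n)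
    (h : BF K U r (fun k => em U ε (Sum.elim v xs k)) (fun k => em U ε (Sum.elim w ys k))) :
    ∀ᶠ n in (U : Filter ℕ), (φ.Realize (fun k => v k n) (fun k => xs k n) ↔
      φ.Realize (fun k => w k n) (fun k => ys k n)) := by
  classical
  induction φ with
  | falsum => exact Eventually.of_forall fun n => Iff.rfl
  | equal t₁ t₂ =>
    obtain ⟨A, h1, h2, h3, rA, i, j, hi, hj, h⟩ := h
    obtain ⟨a, ha, ha'⟩ := term_val ε i j _ _ h t₁
    obtain ⟨b, hb, hb'⟩ := term_val ε i j _ _ h t₂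
    simp only [elim_apply] at ha ha' hb hb'
    by_cases hab : a = b
    · have e1 := (em_eq ε _ _).1 (ha.symm.trans ((congrArg i hab).trans hb))
      have e2 := (em_eq ε _ _).1 (ha'.symm.trans ((congrArg j hab).trans hb'))
      filter_upwards [e1, e2] with n h1 h2
      exact iff_of_true h1 h2
    · have e1 : ¬ _ := fun h => hab (i.injective (ha.trans (((em_eq ε _ _).2 h).trans hb.symm)))
      have e2 : ¬ _ := fun h => hab (j.injective (ha'.trans (((em_eq ε _ _).2 h).trans hb'.symm)))
      rw [← Ultrafilter.eventually_not] at e1 e2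
      filter_upwards [e1, e2] with n h1 h2
      exact iff_of_false h1 h2
  | rel R ts => exact isEmptyElim R
  | imp f₁ f₂ ih₁ ih₂ =>
    filter_upwards [ih₁ xs ys h, ih₂ xs ys h] with n h1 h2
    rw [Language.BoundedFormula.realize_imp, Language.BoundedFormula.realize_imp, h1, h2]
  | @all l f ih =>
    have key : ∀ (v w : α → ∀ n, M n) (xs ys : Fin l → ∀ n, M n),
        BF K U r (fun k => em U ε (Sum.elim v xs k)) (fun k => em U ε (Sum.elim w ys k)) →
        (∀ (xs ys : Fin (l + 1) → ∀ n, M n),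
          BF K U r (fun k => em U ε (Sum.elim v xs k)) (fun k => em U ε (Sum.elim w ys k)) →
          ∀ᶠ n in (U : Filter ℕ), (f.Realize (fun k => v k n) (fun k => xs k n) ↔
            f.Realize (fun k => w k n) (fun k => ys k n))) →
        ∀ᶠ n in (U : Filter ℕ), (f.all.Realize (fun k => w k n) (fun k => ys k n) →
          f.all.Realize (fun k => v k n) (fun k => xs k n)) := by
      intro v w xs ys h ih
      by_contra hcon
      rw [← Ultrafilter.eventually_not] at hcon
      have h1 : ∀ n, ∃ x : M n, ¬ f.all.Realize (fun k => v k n) (fun k => xs k n) →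
          ¬ f.Realize (fun k => v k n) (Fin.snoc (fun k => xs k n) x) := by
        intro n
        by_cases hn : f.all.Realize (fun k => v k n) (fun k => xs k n)
        · exact ⟨0, fun h => absurd hn h⟩
        · have hn' := hn
          rw [Language.BoundedFormula.realize_all] at hn'
          push Not at hn'
          obtain ⟨x, hx⟩ := hn'
          exact ⟨x, fun _ => hx⟩
      choose x hx using h1
      obtain ⟨d, hd, hBF⟩ := h.forth hU hpt (em U ε x) (by
        rw [em, urho_um, um_eq]
        exact Eventually.of_forall fun n => (hε n _).2 ⟨_, rfl⟩)
      obtain ⟨dl, rfl⟩ := um_surj K U d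
      rw [urho_um, um_eq] at hd
      have h2 : ∀ n, ∃ y : M n, r n (dl n) = dl n → ε n y = dl n := by
        intro n
        by_cases hn : r n (dl n) = dl n
        · obtain ⟨y, hy⟩ := (hε n _).1 hn
          exact ⟨y, fun _ => hy⟩
        · exact ⟨0, fun h => absurd h hn⟩
      choose y hy using h2
      have hdy : um K U dl = em U ε y := by
        rw [em, um_eq]
        filter_upwards [hd] with n hn using (hy n hn).symm
      have h3 := ih (Fin.snoc xs x) (Fin.snoc ys y) (by
        rw [elim_snoc_eq, elim_snoc_eq, ← hdy]
        exact hBF _)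
      obtain ⟨n, h4, h5⟩ := (h3.and hcon).exists
      rw [Classical.not_imp] at h5
      rw [snoc_apply, snoc_apply] at h4
      exact hx n h5.2 (h4.2 (h5.1 (y n)))
    filter_upwards [key v w xs ys h ih, key w v ys xs h.symm fun xs ys h => by
      filter_upwards [ih ys xs h.symm] with n hn using hn.symm] with n h1 h2
    exact ⟨h2, h1⟩

end form
end Felg

end part14

section part15
open Polynomial Filter
open FirstOrder

namespace Felg

lemma exists_prime_ext {W : Type} [Field W] [IsAlgClosed W] (ρ : W →+* W) :
    ∃ A : Subfield W, Countable A ∧ IsAlgClosed A ∧ ∀ a ∈ A, ρ a ∈ A := by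
  let k : Subfield W := ⊥
  have hk : Countable k := by
    have h1 := Subfield.cardinalMk_closure_le_max (∅ : Set W)
    rw [Subfield.closure_empty] at h1
    rw [← Cardinal.mk_le_aleph0_iff]
    simpa using h1
  have hρk : ∀ a : k, ρ a = a := by
    intro a
    have h1 : (⊥ : Subfield W) ≤ RingHom.eqLocusField ρ (RingHom.id W) := bot_le
    exact h1 a.2
  refine ⟨(algebraicClosure k W).toSubfield, ?_, ?_, ?_⟩
  · have h1 := Algebraic.countable k W
    have h2 : ((algebraicClosure k W).toSubfield : Set W) = {x | IsAlgebraic k x} :=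
      Set.ext fun x => mem_algebraicClosure_iff
    exact (h2 ▸ h1).to_subtype
  · exact (algebraicClosure.isAlgClosure k W).1
  · intro a ha
    have ha' : IsAlgebraic k a := mem_algebraicClosure_iff.1 ha
    obtain ⟨P, hP, h⟩ := ha'
    refine mem_algebraicClosure_iff.2 ⟨P, hP, ?_⟩
    have h1 := congrArg ρ h
    have e : ρ.comp (algebraMap k W) = algebraMap k W := RingHom.ext fun a => hρk a
    rw [aeval_def, hom_eval₂, map_zero, e] at h1
    rw [aeval_def]
    exact h1

lemma fix_iff (p m : ℕ) [hp : Fact p.Prime] (hm : m ≠ 0) (x : AlgebraicClosure (GaloisField p m)) :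
    x ^ p ^ m = x ↔ ∃ y, algebraMap (GaloisField p m) (AlgebraicClosure (GaloisField p m)) y = x := by
  classical
  have : CharP (AlgebraicClosure (GaloisField p m)) p :=
    charP_of_injective_algebraMap (algebraMap (GaloisField p m) _).injective p
  have : Fintype (GaloisField p m) := Fintype.ofFinite _
  obtain ⟨F, hF, hF'⟩ := card_frob_roots (k := AlgebraicClosure (GaloisField p m)) p m hm
  have hcard : Fintype.card (GaloisField p m) = p ^ m := by
    rw [← Nat.card_eq_fintype_card, GaloisField.card p m hm]
  have hpow : ∀ y : GaloisField p m, y ^ p ^ m = y := by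
    intro y
    rw [← hcard]; exact FiniteField.pow_card y
  have h1 : Finset.univ.map ⟨algebraMap (GaloisField p m) (AlgebraicClosure (GaloisField p m)),
      (algebraMap (GaloisField p m) (AlgebraicClosure (GaloisField p m))).injective⟩ = F := by
    apply Finset.eq_of_subset_of_card_le
    · intro x hx
      obtain ⟨y, -, rfl⟩ := Finset.mem_map.1 hx
      rw [hF']
      change (algebraMap _ _ y) ^ _ = algebraMap _ _ y
      rw [← map_pow, hpow]
    · rw [hF, Finset.card_map, Finset.card_univ, hcard]
  rw [← hF', ← h1, Finset.mem_map]
  simp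

lemma fix_lift {K : ℕ → Type} [∀ n, Field (K n)] {U : Ultrafilter ℕ} {M : ℕ → Type} [∀ n, Field (M n)]
    {r : ∀ n, K n →+* K n} (ε : ∀ n, M n →+* K n)
    (hε : ∀ n x, r n x = x ↔ ∃ y, ε n y = x) (d : UW K U) (hd : urho K U r d = d) :
    ∃ y, d = em U ε y := by
  obtain ⟨dl, rfl⟩ := um_surj K U d
  rw [urho_um, um_eq] at hd
  have h2 : ∀ n, ∃ y : M n, r n (dl n) = dl n → ε n y = dl n := by
    intro n
    by_cases hn : r n (dl n) = dl n
    · obtain ⟨y, hy⟩ := (hε n _).1 hn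
      exact ⟨y, fun _ => hy⟩
    · exact ⟨0, fun h => absurd h hn⟩
  choose y hy using h2
  refine ⟨y, ?_⟩
  rw [em, um_eq]
  filter_upwards [hd] with n hn using (hy n hn).symm

theorem core (φ : Language.ring.Formula (Fin 1)) (p e : ℕ → ℕ) [hp : ∀ n, Fact (p n).Prime]
    (he : ∀ n, e n ≠ 0) (hlim : ∀ N, ∀ᶠ n in cofinite, N ≤ p n ^ e n)
    (h : ∀ n, {x : GaloisField (p n) (2 * e n) | RingFormulaSat φ _ (fun _ => x)} =
      {x | x ^ p n ^ e n = x}) : False := by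
  classical
  let U : Ultrafilter ℕ := hyperfilter ℕ
  have hU : (U : Filter ℕ) ≤ cofinite := hyperfilter_le_cofinite
  let M : ℕ → Type := fun n => GaloisField (p n) (2 * e n)
  let K : ℕ → Type := fun n => AlgebraicClosure (GaloisField (p n) (2 * e n))
  letI : ∀ n, Field (M n) := fun n => inferInstanceAs (Field (GaloisField (p n) (2 * e n)))
  letI : ∀ n, Field (K n) := fun n =>
    inferInstanceAs (Field (AlgebraicClosure (GaloisField (p n) (2 * e n))))
  haveI : ∀ n, IsAlgClosed (K n) := fun n =>
    inferInstanceAs (IsAlgClosed (AlgebraicClosure (GaloisField (p n) (2 * e n))))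
  let ε : ∀ n, M n →+* K n := fun n => algebraMap (GaloisField (p n) (2 * e n)) _
  haveI : ∀ n, CharP (K n) (p n) := fun n =>
    charP_of_injective_algebraMap
      (algebraMap (GaloisField (p n) (2 * e n)) (AlgebraicClosure (GaloisField (p n) (2 * e n)))).injective _
  letI : ∀ n, Ring.CompatibleRing (M n) := fun n => Ring.compatibleRingOfRing (M n)
  let q : ℕ → ℕ := fun n => p n ^ e n
  let r : ∀ n, K n →+* K n := fun n => iterateFrobenius (K n) (p n) (2 * e n)
  let s : ∀ n, K n →+* K n := fun n => iterateFrobenius (K n) (p n) (e n)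
  have hs : ∀ n x, s n x = x ^ q n := fun n x => iterateFrobenius_def _ _ _
  have hr' : ∀ n x, r n x = x ^ p n ^ (2 * e n) := fun n x => iterateFrobenius_def _ _ _
  have hr : ∀ n x, r n x = x ^ (q n ^ 2) := by
    intro n x
    rw [hr']
    congr 1
    rw [mul_comm, pow_mul]
  have hε : ∀ n x, r n x = x ↔ ∃ y, ε n y = x := by
    intro n x
    rw [hr']
    exact fix_iff (p n) (2 * e n) (mul_ne_zero two_ne_zero (he n)) x
  have hlim' : ∀ N, ∀ᶠ n in (U : Filter ℕ), N ≤ q n := fun N => hU (hlim N)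
  have hpt : PointProp (UW K U) (urho K U r) (urho K U s) := by
    intro g α β D g₀ f n₀ h t hg hirr hD hab hg₀ hirr₀ hn₀ hgf hcov
    exact ultra_point K U p e q (fun _ => rfl) he hlim' r s hr hs hg hirr α β D hD hab g₀ f hg₀ hirr₀
      n₀ hn₀ hgf h hcov t
  obtain ⟨A, hA1, hA2, hA3⟩ := exists_prime_ext (urho K U r)
  let rA : A →+* A := ((urho K U r).comp A.subtype).codRestrict A fun a => hA3 _ a.2
  choose al hal using fun a : A => um_surj K U (a : UW K U)
  obtain ⟨x, hx⟩ := saturation (X := K) U hU (fun (a : A) n (x : K n) => s n x = x ∧ x ≠ al a n) (by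
    intro T
    filter_upwards [hlim' (T.card + 1)] with n hn
    obtain ⟨F, hF, hF'⟩ := card_frob_roots (k := K n) (p n) (e n) (he n)
    obtain ⟨x, hx1, hx2⟩ := Finset.exists_mem_notMem_of_card_lt_card
      (s := T.image fun a => al a n) (t := F) (by
        rw [hF]
        exact Finset.card_image_le.trans_lt hn)
    refine ⟨x, fun a ha => ⟨?_, ?_⟩⟩
    · rw [hs]; exact (hF' x).1 hx1
    · rintro rfl
      exact hx2 (Finset.mem_image_of_mem (fun a => al a n) ha))
  set c : UW K U := um K U x with hcdef
  have hκc : urho K U s c = c := by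
    rw [hcdef, urho_um, um_eq]
    filter_upwards [hx 0] with n hn using hn.1
  have hρc : urho K U r c = c := by
    rw [hcdef, urho_um, um_eq]
    filter_upwards [hx 0] with n hn
    have h1 := hn.1
    rw [hs] at h1
    rw [hr, sq, pow_mul, h1, h1]
  have hcA : ∀ a : A, (a : UW K U) ≠ c := by
    intro a ha
    rw [← hal, hcdef, um_eq] at ha
    obtain ⟨n, h1, h2⟩ := (ha.and (hx a)).exists
    exact h2.2 h1.symm
  obtain ⟨A', h1', h2', h3', r', i', j', u, γ, hi', hj', hu, hγ, hκd⟩ :=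
    forth_transc K U hU r s hpt rA A.subtype A.subtype (fun _ => rfl) (fun _ => rfl) c hρc (by
      intro f hf
      by_contra hf0
      obtain ⟨a, ha⟩ := mem_range_of_root A.subtype c f hf0 hf
      exact hcA a ha)
  have hρd : urho K U r (j' γ) = j' γ := by
    rw [← hj']
    congr 1
    apply i'.injective
    rw [hi', hγ, hρc]
  obtain ⟨y, hy⟩ := fix_lift ε hε c hρc
  obtain ⟨y', hy'⟩ := fix_lift ε hε (j' γ) hρd
  have hfin := formula_transfer hU hpt ε hε φ (fun _ => y) (fun _ => y') default default
    ⟨A', h1', h2', h3', r', i', j', hi', hj', by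
      rintro (k | k)
      · exact ⟨γ, hγ.trans hy, hy'⟩
      · exact k.elim0⟩
  rw [hy, em, urho_um, um_eq] at hκc
  rw [hy', em, urho_um, Ne, um_eq, ← Ultrafilter.eventually_not] at hκd
  obtain ⟨n, h1, h2, h3⟩ := (hfin.and (hκc.and hκd)).exists
  have hn : ∀ z : M n, RingFormulaSat φ (M n) (fun _ => z) ↔ z ^ q n = z := fun z =>
    Set.ext_iff.1 (h n) z
  have hsε : ∀ z : M n, s n (ε n z) = ε n z ↔ z ^ q n = z := by
    intro z
    rw [hs, ← map_pow, (ε n).injective.eq_iff]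
  rw [hsε, ← hn] at h2 h3
  have hd : ∀ z : M n, RingFormulaSat φ (M n) (fun _ => z) ↔
      Language.BoundedFormula.Realize φ (fun _ => z) (default : Fin 0 → M n) := by
    intro z
    change Language.BoundedFormula.Realize φ (fun _ => z) _ ↔ _
    exact iff_of_eq (congrArg _ (Subsingleton.elim _ _))
  rw [hd] at h2 h3
  have e1 : (fun k => (default : Fin 0 → ∀ n, M n) k n) = (default : Fin 0 → M n) :=
    Subsingleton.elim _ _
  rw [e1] at h1
  exact h3 (h1.1 h2)

end Felg

end part15

/-- Negative answer to Felgner's problem: for any first-order formula `φ` of the language of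
rings in one free variable, there are only finitely many pairs `(p, k)` (`p` prime, `k ≥ 1`)
such that, in the field with `p^{2k}` elements, `φ` defines exactly the subfield with `p^k`
elements (the fixed points of `x ↦ x^{p^k}`). -/
theorem felgner_negative (φ : Language.ring.Formula (Fin 1)) :
    {pk : ℕ × ℕ | ∃ hp : pk.1.Prime, 1 ≤ pk.2 ∧
      haveI : Fact pk.1.Prime := ⟨hp⟩
      {x : GaloisField pk.1 (2 * pk.2) | RingFormulaSat φ (GaloisField pk.1 (2 * pk.2)) (fun _ => x)} =
        {x : GaloisField pk.1 (2 * pk.2) | x ^ pk.1 ^ pk.2 = x}}.Finite := by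
  by_contra hinf
  rw [← Set.Infinite] at hinf
  let f := hinf.natEmbedding
  haveI : ∀ n, Fact ((f n).1.1).Prime := fun n => ⟨(f n).2.choose⟩
  refine Felg.core φ (fun n => (f n).1.1) (fun n => (f n).1.2) ?_ ?_ ?_
  · intro n
    have := (f n).2.choose_spec.1
    omega
  · intro N
    have h1 : {n | ¬ N ≤ (f n).1.1 ^ (f n).1.2}.Finite := by
      have h2 : Set.Finite (Set.Iio N ×ˢ Set.Iio N) := (Set.finite_Iio N).prod (Set.finite_Iio N)
      have hinj : Function.Injective fun n => (f n).1 := fun a b hab => f.injective (Subtype.ext hab)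
      refine (h2.preimage hinj.injOn).subset ?_
      intro n hn
      have hp : ((f n).1.1).Prime := (f n).2.choose
      have he : 1 ≤ (f n).1.2 := (f n).2.choose_spec.1
      have hn' : (f n).1.1 ^ (f n).1.2 < N := not_le.1 hn
      refine ⟨?_, ?_⟩
      · exact lt_of_le_of_lt (Nat.le_self_pow (by omega) _) hn'
      · exact ((Nat.lt_pow_self hp.one_lt).trans hn')
    exact h1
  · intro n
    exact (f n).2.choose_spec.2
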